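/- For each positive integer ℓ, the number of primes p ≤ x with p > ℓ and φ(p−ℓ) < φ(p+ℓ) is asymptotic to (1/2)π(x) as x → ∞; that is, #{p ≤ x : p prime, p > ℓ, φ(p−ℓ) < φ(p+ℓ)} / π(x) tends to 1/2 as x tends to infinity. -/

import Mathlib

open Filter Topology


section PartA
open MeasureTheory Real

lemma fejer_half (c : ℂ) (hc : c ≠ 0) :
    ∫ t in (0:ℝ)..1, ((1:ℂ) - t) * Complex.exp (c * t) = Complex.exp c / c^2 - 1 / c - 1 / c^2 := by
  have h : ∀ t ∈ Set.uIcc (0:ℝ) 1, HasDerivAt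
      (fun t : ℝ => ((1:ℂ) - t) * Complex.exp (c * t) / c + Complex.exp (c * t) / c^2)
      (((1:ℂ) - t) * Complex.exp (c * t)) t := by
    intro t _
    have h1 : HasDerivAt (fun t : ℝ => (t : ℂ)) 1 t := Complex.ofRealCLM.hasDerivAt
    have h2 : HasDerivAt (fun t : ℝ => Complex.exp (c * t)) (Complex.exp (c * t) * (c * 1)) t :=
      (h1.const_mul c).cexp
    have h3 : HasDerivAt (fun t : ℝ => (1:ℂ) - t) (-1) t := h1.const_sub 1
    convert! ((h3.mul h2).div_const c).add (h2.div_const (c^2)) using 1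
    field_simp
    ring
  rw [intervalIntegral.integral_eq_sub_of_hasDerivAt h]
  · simp; field_simp; ring
  · apply Continuous.intervalIntegrable; fun_prop

noncomputable def fejerK (x : ℝ) : ℝ := (sinc (x/2))^2

lemma fejer_ft (x : ℝ) :
    ∫ t in Set.Ioc (-1:ℝ) 1, (((1 - |t| : ℝ) : ℂ)) * Complex.exp (Complex.I * x * t)
      = (fejerK x : ℂ) := by
  rw [← intervalIntegral.integral_of_le (by norm_num)]
  have hcont : Continuous (fun t : ℝ => (((1 - |t| : ℝ) : ℂ)) * Complex.exp (Complex.I * x * t)) := by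
    fun_prop
  rw [← intervalIntegral.integral_add_adjacent_intervals (b := 0)
    (hcont.intervalIntegrable _ _) (hcont.intervalIntegrable _ _)]
  have e1 : ∫ t in (-1:ℝ)..0, (((1 - |t| : ℝ) : ℂ)) * Complex.exp (Complex.I * x * t)
      = ∫ t in (0:ℝ)..1, ((1:ℂ) - t) * Complex.exp ((-(Complex.I * x)) * t) := by
    have := intervalIntegral.integral_comp_neg (a := 0) (b := 1)
      (fun t : ℝ => (((1 - |t| : ℝ) : ℂ)) * Complex.exp (Complex.I * x * t))
    rw [neg_zero] at this
    rw [← this]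
    apply intervalIntegral.integral_congr
    intro t ht
    rw [Set.uIcc_of_le (by norm_num)] at ht
    simp [abs_of_nonneg ht.1]
  have e2 : ∫ t in (0:ℝ)..1, (((1 - |t| : ℝ) : ℂ)) * Complex.exp (Complex.I * x * t)
      = ∫ t in (0:ℝ)..1, ((1:ℂ) - t) * Complex.exp ((Complex.I * x) * t) := by
    apply intervalIntegral.integral_congr
    intro t ht
    rw [Set.uIcc_of_le (by norm_num)] at ht
    simp [abs_of_nonneg ht.1]
  rw [e1, e2]
  by_cases hx : x = 0
  · subst hx
    simp only [fejerK]
    have : ∫ t in (0:ℝ)..1, ((1:ℂ) - t) = 1/2 := by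
      have h2 := intervalIntegral.integral_ofReal (a := 0) (b := 1) (μ := volume) (f := fun t : ℝ => 1 - t)
      have h3 : ∫ t in (0:ℝ)..1, (1 - t) = 1/2 := by
        rw [intervalIntegral.integral_sub (by simp) (by simp)]; simp; norm_num
      rw [h3] at h2
      push_cast at h2
      simpa using h2
    simp [this]; norm_num
  · have hc : Complex.I * x ≠ 0 := by simp [hx]
    rw [fejer_half _ hc, fejer_half _ (neg_ne_zero.mpr hc)]
    have hcos : Complex.exp (-(Complex.I * x)) + Complex.exp (Complex.I * x) = 2 * Complex.cos x := by
      rw [Complex.two_cos]; ring_nf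
    have hs : sinc (x/2) = sin (x/2) / (x/2) := sinc_of_ne_zero (by simpa using hx)
    have hcx : Complex.cos x = 1 - 2 * (Complex.sin (x/2))^2 := by
      have := Complex.cos_two_mul' ((x:ℂ)/2)
      rw [show 2 * ((x:ℂ)/2) = x by ring] at this
      rw [this, Complex.cos_sq']; ring
    rw [hcx] at hcos
    have hxc : (x:ℂ) ≠ 0 := by exact_mod_cast hx
    rw [fejerK, hs]
    push_cast
    have key : Complex.exp (-(Complex.I * ↑x)) / (-(Complex.I * ↑x)) ^ 2 - 1 / -(Complex.I * ↑x) - 1 / (-(Complex.I * ↑x)) ^ 2 +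
      (Complex.exp (Complex.I * ↑x) / (Complex.I * ↑x) ^ 2 - 1 / (Complex.I * ↑x) - 1 / (Complex.I * ↑x) ^ 2)
      = ((Complex.exp (-(Complex.I * x)) + Complex.exp (Complex.I * x)) - 2) / (Complex.I * x)^2 := by
      rw [div_neg, neg_sq]; ring
    rw [key, hcos, mul_pow, Complex.I_sq]
    field_simp
    ring

lemma fejerK_nonneg (x : ℝ) : 0 ≤ fejerK x := sq_nonneg _
lemma fejerK_cont : Continuous fejerK := by
  unfold fejerK
  have := continuous_sinc
  fun_prop

lemma fejerK_integrable : Integrable fejerK := by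
  have h := (integrable_inv_one_add_sq).const_mul (8:ℝ)
  refine h.mono' fejerK_cont.aestronglyMeasurable (ae_of_all _ fun x => ?_)
  rw [norm_eq_abs, abs_of_nonneg (fejerK_nonneg x), ← div_eq_mul_inv, le_div_iff₀ (by positivity)]
  have h1 : fejerK x ≤ 1 := by
    unfold fejerK; exact (sq_le_one_iff_abs_le_one _).2 (abs_sinc_le_one _)
  have h2 : fejerK x * x^2 ≤ 4 := by
    by_cases hx : x = 0
    · simp [hx]
    · rw [fejerK, sinc_of_ne_zero (by simpa using hx)]
      have := sin_sq_le_one (x/2)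
      have e : (sin (x/2) / (x/2))^2 * x^2 = 4 * sin (x/2)^2 := by field_simp; norm_num; ring
      rw [e]; linarith
  nlinarith [h1, h2]

lemma fejerK_integral_pos : 0 < ∫ x, fejerK x := by
  rw [integral_pos_iff_support_of_nonneg fejerK_nonneg fejerK_integrable]
  have : IsOpen (Function.support fejerK) := fejerK_cont.isOpen_support
  exact this.measure_pos volume ⟨0, by simp [fejerK]⟩

lemma damped_identity (D : ℝ → ℝ) (hD : Measurable D) (M : ℝ) (hM : ∀ u, |D u| ≤ M)
    (G : ℂ → ℂ) 
    (hG : ∀ s : ℂ, 0 < s.re → G s = ∫ u in Set.Ioi (0:ℝ), (D u : ℂ) * Complex.exp (-s * u))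
    (lam v ε : ℝ) (hε : 0 < ε) :
    ((∫ u in Set.Ioi (0:ℝ), D u * Real.exp (-ε * u) * fejerK (lam * (v - u)) : ℝ) : ℂ) =
      ∫ t in Set.Ioc (-1:ℝ) 1, ((1 - |t| : ℝ) : ℂ) * Complex.exp (Complex.I * (lam * v) * t)
        * G (ε + Complex.I * lam * t) := by
  have hint : Integrable (Function.uncurry fun (u t : ℝ) => (D u : ℂ) * Complex.exp (-ε * u) *
      (((1 - |t| : ℝ) : ℂ) * Complex.exp (Complex.I * (lam * (v-u) : ℝ) * t)))
      ((volume.restrict (Set.Ioi (0:ℝ))).prod (volume.restrict (Set.Ioc (-1:ℝ) 1))) := by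
    have h1 : Integrable (fun u : ℝ => M * Real.exp (-ε * u)) (volume.restrict (Set.Ioi (0:ℝ))) :=
      (exp_neg_integrableOn_Ioi 0 hε).const_mul M
    have h2 : Integrable (fun t : ℝ => (1:ℝ)) (volume.restrict (Set.Ioc (-1:ℝ) 1)) :=
      integrable_const _
    refine (h1.mul_prod h2).mono' ?_ ?_
    · apply Measurable.aestronglyMeasurable
      unfold Function.uncurry
      fun_prop
    · rw [Measure.prod_restrict]
      refine (ae_restrict_iff' (measurableSet_Ioi.prod measurableSet_Ioc)).2 (ae_of_all _ ?_)
      rintro ⟨u, t⟩ ⟨_, ht⟩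
      simp only [Function.uncurry, norm_mul, mul_one]
      have e1 : ‖Complex.exp (-(ε:ℂ) * u)‖ = Real.exp (-ε * u) := by
        rw [Complex.norm_exp]; simp
      have e2 : ‖Complex.exp (Complex.I * ((lam * (v-u) : ℝ):ℂ) * t)‖ = 1 := by
        rw [Complex.norm_exp]; simp
      rw [e1, e2, Complex.norm_real, Complex.norm_real, norm_eq_abs, norm_eq_abs]
      have h3 : abs (1 - |t|) ≤ 1 := by
        have : |t| ≤ 1 := abs_le.2 ⟨ht.1.le, ht.2⟩
        rw [abs_of_nonneg (by linarith)]
        linarith [abs_nonneg t]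
      have := hM u
      calc |D u| * Real.exp (-ε * u) * (abs (1 - |t|) * 1) ≤ M * Real.exp (-ε*u) * (1*1) := by
            gcongr
            exact mul_nonneg ((abs_nonneg _).trans this) (Real.exp_pos _).le
        _ = _ := by ring
  have hsw := integral_integral_swap hint
  rw [← integral_complex_ofReal]
  calc _ = ∫ u in Set.Ioi (0:ℝ), ∫ t in Set.Ioc (-1:ℝ) 1, (D u : ℂ) * Complex.exp (-ε * u) *
      (((1 - |t| : ℝ) : ℂ) * Complex.exp (Complex.I * (lam * (v-u) : ℝ) * t)) := by
        congr 1; ext u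
        rw [integral_const_mul, fejer_ft]
        push_cast; ring
    _ = _ := hsw
    _ = _ := by
        congr 1; ext t
        rw [hG _ (by simp [hε]), ← integral_const_mul]
        congr 1; ext u
        have : Complex.exp (-↑ε * ↑u) * Complex.exp (Complex.I * (lam * (v-u) : ℝ) * t)
          = Complex.exp (Complex.I * (↑lam * ↑v) * ↑t) * Complex.exp (-(↑ε + Complex.I * ↑lam * ↑t) * ↑u) := by
          rw [← Complex.exp_add, ← Complex.exp_add]; congr 1; push_cast; ring
        linear_combination (D u : ℂ) * ((1 - |t| : ℝ) : ℂ) * this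
end PartA


section PartA2
open MeasureTheory Real

lemma fejer_shift_integrable (lam v : ℝ) (hl : 0 < lam) :
    Integrable (fun u : ℝ => fejerK (lam * (v - u))) := 
  (fejerK_integrable.comp_mul_left' hl.ne').comp_sub_left v

lemma undamped_identity (D : ℝ → ℝ) (hD : Measurable D) (M : ℝ) (hM : ∀ u, |D u| ≤ M)
    (G : ℂ → ℂ) (hGc : ContinuousOn G {s | 0 ≤ s.re})
    (hG : ∀ s : ℂ, 0 < s.re → G s = ∫ u in Set.Ioi (0:ℝ), (D u : ℂ) * Complex.exp (-s * u))
    (lam v : ℝ) (hl : 0 < lam) :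
    ((∫ u in Set.Ioi (0:ℝ), D u * fejerK (lam * (v - u)) : ℝ) : ℂ) =
      ∫ t in Set.Ioc (-1:ℝ) 1, ((1 - |t| : ℝ) : ℂ) * Complex.exp (Complex.I * (lam * v) * t)
        * G (Complex.I * lam * t) := by
  have hKm := fejerK_cont.measurable
  have hin : ∀ᶠ ε : ℝ in 𝓝[>] 0, 0 < ε ∧ ε ≤ 1 := by
    filter_upwards [Ioc_mem_nhdsGT (zero_lt_one' ℝ)] with ε h using ⟨h.1, h.2⟩
  have L : Tendsto (fun ε : ℝ => ((∫ u in Set.Ioi (0:ℝ), D u * Real.exp (-ε * u) * fejerK (lam * (v - u)) : ℝ) : ℂ))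
      (𝓝[>] 0) (𝓝 ((∫ u in Set.Ioi (0:ℝ), D u * fejerK (lam * (v - u)) : ℝ) : ℂ)) := by
    refine (Complex.continuous_ofReal.tendsto _).comp ?_
    refine tendsto_integral_filter_of_dominated_convergence (fun u => M * fejerK (lam * (v - u))) ?_ ?_ ?_ ?_
    · refine Eventually.of_forall fun ε => Measurable.aestronglyMeasurable ?_
      fun_prop
    · filter_upwards [hin] with ε hε
      refine (ae_restrict_iff' measurableSet_Ioi).2 (ae_of_all _ fun u hu => ?_)
      rw [norm_mul, norm_mul, norm_eq_abs, norm_eq_abs, norm_eq_abs, abs_of_nonneg (fejerK_nonneg _),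
        abs_of_pos (exp_pos _)]
      have h1 : rexp (-ε * u) ≤ 1 := by
        rw [exp_le_one_iff]; nlinarith [hε.1, Set.mem_Ioi.1 hu]
      have := hM u
      gcongr
      · exact fejerK_nonneg _
      · calc |D u| * rexp (-ε * u) ≤ M * 1 := by
              gcongr
              exact (abs_nonneg _).trans this
          _ = M := mul_one _
    · exact ((fejer_shift_integrable lam v hl).const_mul M).integrableOn
    · refine ae_of_all _ fun u => ?_
      have : Tendsto (fun ε : ℝ => D u * rexp (-ε * u) * fejerK (lam * (v - u))) (𝓝 0)
          (𝓝 (D u * rexp (-0 * u) * fejerK (lam * (v - u)))) := by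
        apply Continuous.tendsto; fun_prop
      simp only [neg_zero, zero_mul, exp_zero, mul_one] at this
      exact this.mono_left nhdsWithin_le_nhds
  have hmap : ContinuousOn (fun z : ℝ × ℝ => G (z.1 + Complex.I * lam * z.2)) (Set.Icc 0 1 ×ˢ Set.Icc (-1) 1) := by
    refine hGc.comp (by fun_prop) ?_
    rintro ⟨a, b⟩ ⟨ha, _⟩
    simpa using ha.1
  obtain ⟨C, hC⟩ := (isCompact_Icc.prod isCompact_Icc).exists_bound_of_continuousOn hmap
  have R : Tendsto (fun ε : ℝ => ∫ t in Set.Ioc (-1:ℝ) 1, ((1 - |t| : ℝ) : ℂ) * Complex.exp (Complex.I * (lam * v) * t)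
        * G (ε + Complex.I * lam * t)) (𝓝[>] 0) (𝓝 (∫ t in Set.Ioc (-1:ℝ) 1, ((1 - |t| : ℝ) : ℂ) * Complex.exp (Complex.I * (lam * v) * t)
        * G (Complex.I * lam * t))) := by
    refine tendsto_integral_filter_of_dominated_convergence (fun u => C) ?_ ?_ ?_ ?_
    · filter_upwards [hin] with ε hε
      apply ContinuousOn.aestronglyMeasurable _ measurableSet_Ioc
      refine ContinuousOn.mul (by fun_prop) ?_
      refine hGc.comp (by fun_prop) ?_
      intro t _
      simpa using hε.1.le
    · filter_upwards [hin] with ε hε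
      refine (ae_restrict_iff' measurableSet_Ioc).2 (ae_of_all _ fun t ht => ?_)
      have hb := hC (ε, t) ⟨⟨hε.1.le, hε.2⟩, ⟨ht.1.le, ht.2⟩⟩
      have e2 : ‖Complex.exp (Complex.I * (lam * v) * t)‖ = 1 := by
        rw [Complex.norm_exp]; simp
      rw [norm_mul, norm_mul, e2, Complex.norm_real, norm_eq_abs]
      have h3 : abs (1 - |t|) ≤ 1 := by
        have : |t| ≤ 1 := abs_le.2 ⟨ht.1.le, ht.2⟩
        rw [abs_of_nonneg (by linarith)]
        linarith [abs_nonneg t]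
      calc _ ≤ 1 * 1 * C := by gcongr
        _ = C := by ring
    · exact integrable_const _
    · refine (ae_restrict_iff' measurableSet_Ioc).2 (ae_of_all _ fun t ht => ?_)
      refine Tendsto.const_mul _ ?_
      have h1 : Tendsto G (𝓝[{s | 0 ≤ s.re}] (Complex.I * lam * t)) (𝓝 (G (Complex.I * lam * t))) := 
        hGc (Complex.I * lam * t) (by simp)
      refine h1.comp (tendsto_nhdsWithin_iff.2 ⟨?_, ?_⟩)
      · have : Tendsto (fun ε : ℝ => (ε : ℂ) + Complex.I * lam * t) (𝓝 0) (𝓝 (((0:ℝ):ℂ) + Complex.I * lam * t)) := by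
          apply Continuous.tendsto; fun_prop
        simp only [Complex.ofReal_zero, zero_add] at this
        exact this.mono_left nhdsWithin_le_nhds
      · filter_upwards [hin] with ε hε
        simpa using hε.1.le
  refine tendsto_nhds_unique (L.congr' ?_) R
  filter_upwards [hin] with ε hε
  exact damped_identity D hD M hM G hG lam v ε hε.1

lemma kernel_limit (D : ℝ → ℝ) (hD : Measurable D) (M : ℝ) (hM : ∀ u, |D u| ≤ M)
    (G : ℂ → ℂ) (hGc : ContinuousOn G {s | 0 ≤ s.re})
    (hG : ∀ s : ℂ, 0 < s.re → G s = ∫ u in Set.Ioi (0:ℝ), (D u : ℂ) * Complex.exp (-s * u))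
    (lam : ℝ) (hl : 0 < lam) :
    Tendsto (fun v => ∫ u in Set.Ioi (0:ℝ), D u * fejerK (lam * (v - u))) atTop (𝓝 0) := by
  have RL := Real.tendsto_integral_exp_smul_cocompact
    (Set.indicator (Set.Ioc (-1:ℝ) 1) fun t : ℝ => ((1 - |t| : ℝ) : ℂ) * G (Complex.I * lam * t))
  have hw : Tendsto (fun v : ℝ => -(lam / (2 * π)) * v) atTop (cocompact ℝ) := by
    refine Tendsto.mono_right ?_ atBot_le_cocompact
    exact tendsto_id.const_mul_atTop_of_neg (by simp; positivity)
  have h2 := RL.comp hw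
  have h3 : Tendsto (fun v => ((∫ u in Set.Ioi (0:ℝ), D u * fejerK (lam * (v - u)) : ℝ) : ℂ)) atTop (𝓝 0) := by
    refine h2.congr fun v => ?_
    rw [undamped_identity D hD M hM G hGc hG lam v hl, ← integral_indicator measurableSet_Ioc]
    simp only [Function.comp]
    congr 1; ext t
    by_cases ht : t ∈ Set.Ioc (-1:ℝ) 1
    · rw [Set.indicator_of_mem ht, Set.indicator_of_mem ht, Circle.smul_def, Real.fourierChar_apply, smul_eq_mul]
      have : ((2 * π * -(t * (-(lam / (2 * π)) * v)) : ℝ) : ℂ) * Complex.I = Complex.I * (↑lam * ↑v) * ↑t := by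
        have : (2 * π * -(t * (-(lam / (2 * π)) * v)) : ℝ) = lam * v * t := by
          field_simp
        rw [this]; push_cast; ring
      rw [this]; ring
    · rw [Set.indicator_of_notMem ht, Set.indicator_of_notMem ht, smul_zero]
  exact_mod_cast (Complex.continuous_re.tendsto 0).comp h3

end PartA2


section PartA3
open MeasureTheory Real

lemma tauber_kernel (B : ℝ → ℝ) (hB : Measurable B) (M A : ℝ) (hB0 : ∀ u, 0 ≤ B u) (hBM : ∀ u, B u ≤ M)
    (G : ℂ → ℂ) (hGc : ContinuousOn G {s | 0 ≤ s.re})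
    (hG : ∀ s : ℂ, 0 < s.re → G s = ∫ u in Set.Ioi (0:ℝ), ((B u - A : ℝ) : ℂ) * Complex.exp (-s * u))
    (δ : ℝ) (hδ : 0 < δ) :
    ∃ κ : ℝ → ℝ, Integrable κ ∧ (∀ w, 0 ≤ κ w) ∧ ∫ w, κ w = 1 ∧ 1 - δ ≤ ∫ w in Set.Icc (-δ) δ, κ w ∧
      Tendsto (fun v => ∫ u in Set.Ioi (0:ℝ), B u * κ (v - u)) atTop (𝓝 A) := by
  set c := ∫ x, fejerK x with hc
  have hcpos : 0 < c := fejerK_integral_pos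
  -- choose lam
  have h1 : Tendsto (fun R : ℝ => ∫ x in (-R)..R, fejerK x) atTop (𝓝 c) :=
    intervalIntegral_tendsto_integral fejerK_integrable tendsto_neg_atTop_atBot tendsto_id
  have h2 : ∀ᶠ R : ℝ in atTop, (1 - δ) * c < ∫ x in (-R)..R, fejerK x :=
    h1.eventually (lt_mem_nhds (by nlinarith))
  obtain ⟨R, hR, hR0⟩ := (h2.and (eventually_gt_atTop 0)).exists
  set lam := R / δ with hlam
  have hl : 0 < lam := by positivity
  have hint : Integrable (fun w => lam / c * fejerK (lam * w)) :=
    (fejerK_integrable.comp_mul_left' hl.ne').const_mul _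
  have hone : ∫ w, lam / c * fejerK (lam * w) = 1 := by
    rw [integral_const_mul, Measure.integral_comp_mul_left, ← hc, abs_of_pos (by positivity), smul_eq_mul]
    field_simp
  refine ⟨fun w => lam / c * fejerK (lam * w), hint, ?_, hone, ?_, ?_⟩
  · intro w; have := fejerK_nonneg (lam * w); positivity
  · rw [integral_Icc_eq_integral_Ioc, ← intervalIntegral.integral_of_le (by linarith),
      intervalIntegral.integral_const_mul, intervalIntegral.integral_comp_mul_left _ hl.ne', smul_eq_mul]
    have e : lam * δ = R := by rw [hlam]; field_simp
    rw [mul_neg, e]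
    have : lam / c * (lam⁻¹ * ∫ x in (-R)..R, fejerK x) = (∫ x in (-R)..R, fejerK x) / c := by
      field_simp
    rw [this, le_div_iff₀ hcpos]
    exact hR.le
  · have hM0 : 0 ≤ M := (hB0 0).trans (hBM 0)
    have k1 := (kernel_limit (fun u => B u - A) (by fun_prop) (M + |A|) (fun u => by
      rw [abs_le]; constructor <;> linarith [hB0 u, hBM u, neg_abs_le A, le_abs_self A]) G hGc hG lam hl).const_mul (lam/c)
    have k2 : Tendsto (fun v : ℝ => ∫ w in Set.Iic v, lam / c * fejerK (lam * w)) atTop (𝓝 1) := by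
      rw [← hone]
      exact (aecover_Iic tendsto_id).integral_tendsto_of_countably_generated hint
    have k3 := k1.add (k2.const_mul A)
    simp only [mul_zero, zero_add, mul_one] at k3
    refine k3.congr fun v => ?_
    have e1 : ∫ w in Set.Iic v, lam / c * fejerK (lam * w) = ∫ u in Set.Ioi (0:ℝ), lam / c * fejerK (lam * (v - u)) := by
      rw [integral_Iic_eq_integral_Iio, ← integral_indicator measurableSet_Iio, ← integral_indicator measurableSet_Ioi,
        ← integral_sub_left_eq_self _ volume v]
      congr 1; ext u
      by_cases hu : 0 < u
      · rw [Set.indicator_of_mem (by simpa using hu), Set.indicator_of_mem (by simpa using hu)]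
      · rw [Set.indicator_of_notMem (by simpa using hu), Set.indicator_of_notMem (by simpa using hu)]
    have i1 := fejer_shift_integrable lam v hl
    have i2 : Integrable (fun u => (B u - A) * fejerK (lam * (v - u))) := by
      refine i1.bdd_mul (c := M + |A|) (by fun_prop) (ae_of_all _ fun u => ?_)
      rw [norm_eq_abs, abs_le]; constructor <;> linarith [hB0 u, hBM u, neg_abs_le A, le_abs_self A]
    rw [e1, ← integral_const_mul, ← integral_const_mul, ← integral_add]
    · congr 1; ext u; ring
    · exact (i2.const_mul _).integrableOn
    · exact ((i1.const_mul _).const_mul _).integrableOn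

lemma tauber (B : ℝ → ℝ) (hB : Measurable B) (M A : ℝ) (hB0 : ∀ u, 0 ≤ B u) (hBM : ∀ u, B u ≤ M)
    (hmono : ∀ u v, u ≤ v → B u ≤ B v * exp (v - u))
    (G : ℂ → ℂ) (hGc : ContinuousOn G {s | 0 ≤ s.re})
    (hG : ∀ s : ℂ, 0 < s.re → G s = ∫ u in Set.Ioi (0:ℝ), ((B u - A : ℝ) : ℂ) * Complex.exp (-s * u)) :
    Tendsto B atTop (𝓝 A) := by
  have hM0 : 0 ≤ M := (hB0 0).trans (hBM 0)
  have up : Tendsto (fun δ : ℝ => exp (2*δ) * (A + δ) / (1 - δ)) (𝓝[>] 0) (𝓝 A) := by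
    have : Tendsto (fun δ : ℝ => exp (2*δ) * (A + δ) / (1 - δ)) (𝓝 0) (𝓝 (exp (2*0) * (A + 0) / (1 - 0))) :=
      Tendsto.div (Continuous.tendsto (by fun_prop) _) (Continuous.tendsto (by fun_prop) _) (by norm_num)
    simp only [mul_zero, exp_zero, add_zero, one_mul, sub_zero, div_one] at this
    exact this.mono_left nhdsWithin_le_nhds
  have lo : Tendsto (fun δ : ℝ => exp (-2*δ) * (A - δ - M * δ)) (𝓝[>] 0) (𝓝 A) := by
    have : Tendsto (fun δ : ℝ => exp (-2*δ) * (A - δ - M * δ)) (𝓝 0) (𝓝 (exp (-2*0) * (A - 0 - M * 0))) :=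
      (Continuous.tendsto (by fun_prop) _)
    simp only [mul_zero, exp_zero, one_mul, sub_zero] at this
    exact this.mono_left nhdsWithin_le_nhds
  have hin : ∀ᶠ ε : ℝ in 𝓝[>] 0, 0 < ε ∧ ε < 1 := by
    filter_upwards [Ioo_mem_nhdsGT (zero_lt_one' ℝ)] with ε h using ⟨h.1, h.2⟩
  rw [tendsto_order]
  constructor
  · intro a ha
    obtain ⟨δ, hδ, hδ0, hδ1⟩ := ((lo.eventually (lt_mem_nhds ha)).and hin).exists
    obtain ⟨κ, hκi, hκ0, hκ1, hκδ, hlim⟩ := tauber_kernel B hB M A hB0 hBM G hGc hG δ hδ0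
    have hl2 := hlim.comp (tendsto_atTop_add_const_right atTop (-δ) tendsto_id)
    have hl3 := hl2.eventually (lt_mem_nhds (show A - δ < A by linarith))
    filter_upwards [hl3] with v hv
    refine hδ.trans_le ?_
    simp only [Function.comp, id] at hv
    have hsh : Integrable (fun u => κ (v + -δ - u)) := hκi.comp_sub_left _
    have hshI : Integrable (fun u => (Set.Icc (-δ) δ)ᶜ.indicator κ (v + -δ - u)) :=
      (hκi.indicator (measurableSet_Icc.compl)).comp_sub_left _
    have b1 : ∫ u in Set.Ioi (0:ℝ), B u * κ (v + -δ - u) ≤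
        ∫ u, (B v * exp (2*δ) * κ (v + -δ - u) + M * (Set.Icc (-δ) δ)ᶜ.indicator κ (v + -δ - u)) := by
      have iB : Integrable (fun u => B u * κ (v + -δ - u)) := by
        refine hsh.bdd_mul (c := M) (by fun_prop) (ae_of_all _ fun u => ?_)
        rw [norm_eq_abs, abs_of_nonneg (hB0 u)]; exact hBM u
      refine (setIntegral_le_integral iB (ae_of_all _ fun u => mul_nonneg (hB0 u) (hκ0 _))).trans ?_
      refine integral_mono iB ((hsh.const_mul _).add (hshI.const_mul _)) fun u => ?_
      simp only
      by_cases hu : v + -δ - u ∈ Set.Icc (-δ) δ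
      · rw [Set.indicator_of_notMem (by simpa using hu), mul_zero, add_zero]
        refine mul_le_mul_of_nonneg_right ?_ (hκ0 _)
        refine (hmono u v (by linarith [hu.1])).trans ?_
        refine mul_le_mul_of_nonneg_left (exp_le_exp.2 (by linarith [hu.2])) (hB0 v)
      · rw [Set.indicator_of_mem hu]
        have := mul_le_mul_of_nonneg_right (hBM u) (hκ0 (v + -δ - u))
        have h2 : 0 ≤ B v * exp (2*δ) * κ (v + -δ - u) := 
          mul_nonneg (mul_nonneg (hB0 v) (exp_pos _).le) (hκ0 _)
        linarith
    rw [integral_add (hsh.const_mul _) (hshI.const_mul _), integral_const_mul, integral_const_mul,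
      integral_sub_left_eq_self κ volume, integral_sub_left_eq_self ((Set.Icc (-δ) δ)ᶜ.indicator κ) volume, hκ1,
      integral_indicator measurableSet_Icc.compl] at b1
    have b2 := integral_add_compl (measurableSet_Icc (a := -δ) (b := δ)) hκi
    have b3 : ∫ x in (Set.Icc (-δ) δ)ᶜ, κ x ≤ δ := by linarith
    have b4 : A - δ - M * δ ≤ B v * exp (2*δ) := by
      have := mul_le_mul_of_nonneg_left b3 hM0
      linarith
    have b5 := mul_le_mul_of_nonneg_left b4 (exp_pos (-2*δ)).le
    have b6 : exp (-2*δ) * (B v * exp (2*δ)) = B v := by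
      rw [mul_left_comm, ← exp_add]; simp
    linarith
  · intro a ha
    obtain ⟨δ, hδ, hδ0, hδ1⟩ := ((up.eventually (gt_mem_nhds ha)).and hin).exists
    obtain ⟨κ, hκi, hκ0, hκ1, hκδ, hlim⟩ := tauber_kernel B hB M A hB0 hBM G hGc hG δ hδ0
    have hl2 := hlim.comp (tendsto_atTop_add_const_right atTop δ tendsto_id)
    have hl3 := hl2.eventually (gt_mem_nhds (show A < A + δ by linarith))
    filter_upwards [hl3, eventually_gt_atTop 0] with v hv hv0
    refine lt_of_le_of_lt ?_ hδ
    simp only [Function.comp, id] at hv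
    have hsh : Integrable (fun u => κ (v + δ - u)) := hκi.comp_sub_left _
    have hshI : Integrable (fun u => (Set.Icc (-δ) δ).indicator κ (v + δ - u)) :=
      (hκi.indicator (measurableSet_Icc)).comp_sub_left _
    have iB : Integrable (fun u => B u * κ (v + δ - u)) := by
      refine hsh.bdd_mul (c := M) (by fun_prop) (ae_of_all _ fun u => ?_)
      rw [norm_eq_abs, abs_of_nonneg (hB0 u)]; exact hBM u
    have b1 : ∫ u, (B v * exp (-2*δ) * (Set.Icc (-δ) δ).indicator κ (v + δ - u)) ≤
        ∫ u in Set.Ioi (0:ℝ), B u * κ (v + δ - u) := by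
      rw [← integral_indicator measurableSet_Ioi]
      refine integral_mono (hshI.const_mul _) (iB.indicator measurableSet_Ioi) fun u => ?_
      simp only
      by_cases hu : v + δ - u ∈ Set.Icc (-δ) δ
      · have hu1 : v ≤ u := by linarith [hu.2]
        rw [Set.indicator_of_mem hu, Set.indicator_of_mem (by simp; linarith)]
        refine mul_le_mul_of_nonneg_right ?_ (hκ0 _)
        have h1 := hmono v u hu1
        have h2 : B u * exp (u - v) ≤ B u * exp (2*δ) :=
          mul_le_mul_of_nonneg_left (exp_le_exp.2 (by linarith [hu.1])) (hB0 u)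
        have h3 := mul_le_mul_of_nonneg_right (h1.trans h2) (exp_pos (-2*δ)).le
        have b6 : (B u * exp (2*δ)) * exp (-2*δ) = B u := by
          rw [mul_assoc, ← exp_add]; simp
        linarith
      · rw [Set.indicator_of_notMem hu, mul_zero]
        exact Set.indicator_nonneg (fun u _ => mul_nonneg (hB0 u) (hκ0 _)) _
    rw [integral_const_mul, integral_sub_left_eq_self ((Set.Icc (-δ) δ).indicator κ) volume,
      integral_indicator measurableSet_Icc] at b1
    have b2 : B v * exp (-2*δ) * (1 - δ) ≤ A + δ := 
      (mul_le_mul_of_nonneg_left hκδ (mul_nonneg (hB0 v) (exp_pos _).le)).trans (b1.trans hv.le)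
    rw [le_div_iff₀ (by linarith)]
    have b5 := mul_le_mul_of_nonneg_left b2 (exp_pos (2*δ)).le
    have b6 : exp (2*δ) * (B v * exp (-2*δ) * (1 - δ)) = B v * (1-δ) := by
      have : exp (2*δ) * exp (-2*δ) = 1 := by rw [← exp_add]; simp
      linear_combination B v * (1-δ) * this
    linarith
end PartA3


section PartB
open MeasureTheory Real ArithmeticFunction.vonMangoldt
open scoped Chebyshev

variable {q : ℕ} (a : ZMod q)

noncomputable def psiRes (x : ℝ) : ℝ := ∑ k ∈ Finset.Icc 1 ⌊x⌋₊, residueClass a k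

lemma psiRes_nonneg (x : ℝ) : 0 ≤ psiRes a x := Finset.sum_nonneg fun _ _ => residueClass_nonneg a _

lemma psiRes_mono : Monotone (psiRes a) := by
  intro x y hxy
  refine Finset.sum_le_sum_of_subset_of_nonneg ?_ (fun _ _ _ => residueClass_nonneg a _)
  exact Finset.Icc_subset_Icc le_rfl (Nat.floor_mono hxy)

lemma psiRes_le {x : ℝ} (hx : 0 ≤ x) : psiRes a x ≤ (log 4 + 4) * x := by
  refine le_trans ?_ (Chebyshev.psi_le_const_mul_self hx)
  unfold psiRes Chebyshev.psi
  exact Finset.sum_le_sum fun _ _ => residueClass_le a _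

lemma integral_exp_subst (f : ℝ → ℂ) :
    ∫ t in Set.Ioi (1:ℝ), f t = ∫ u in Set.Ioi (0:ℝ), (exp u : ℂ) * f (exp u) := by
  have himg : Real.exp '' (Set.Ioi 0) = Set.Ioi 1 := by
    ext y; constructor
    · rintro ⟨x, hx, rfl⟩; simpa using hx
    · intro hy
      have hy' : (1:ℝ) < y := hy
      exact ⟨log y, log_pos hy', exp_log (by linarith)⟩
  rw [← himg, integral_image_eq_integral_abs_deriv_smul measurableSet_Ioi
    (fun x _ => (Real.hasDerivAt_exp x).hasDerivWithinAt) Real.exp_injective.injOn]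
  congr 1; ext u
  rw [abs_of_pos (exp_pos u)]; simp

lemma laplace_res [NeZero q] (ha : IsUnit a) (s : ℂ) (hs : 0 < s.re) :
    (LFunctionResidueClassAux a (s + 1) - (q.totient : ℂ)⁻¹) / (s + 1) =
    ∫ u in Set.Ioi (0:ℝ), ((psiRes a (exp u) * exp (-u) - (q.totient : ℝ)⁻¹ : ℝ) : ℂ) * Complex.exp (-s * u) := by
  set A : ℂ := (q.totient : ℂ)⁻¹
  have hs1 : s + 1 ≠ 0 := by
    intro h; have := congrArg Complex.re h; simp at this; linarith
  have hs0 : s ≠ 0 := by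
    intro h; rw [h] at hs; simp at hs
  have e0 := eqOn_LFunctionResidueClassAux ha (x := s + 1) (by simpa using hs)
  simp only [add_sub_cancel_right] at e0
  have hL := LSeries_eq_mul_integral_of_nonneg (residueClass a) (r := 1) zero_le_one (s := s + 1)
    (by simpa using hs) (by
      refine Asymptotics.IsBigO.of_bound (log 4 + 4) (Eventually.of_forall fun n => ?_)
      have := psiRes_le a (x := n) (Nat.cast_nonneg n)
      have h0 := psiRes_nonneg a (n:ℝ)
      simp only [psiRes, Nat.floor_natCast] at this h0
      rw [norm_eq_abs, abs_of_nonneg h0, rpow_one, norm_eq_abs, Nat.abs_cast]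
      exact this) (residueClass_nonneg a)
  rw [integral_exp_subst] at hL
  have hA : ∫ u in Set.Ioi (0:ℝ), A * Complex.exp (-s * u) = A / s := by
    rw [integral_const_mul, integral_exp_mul_complex_Ioi (by simpa using hs)]
    simp; field_simp
  have hB : ∫ u in Set.Ioi (0:ℝ), ((psiRes a (exp u) * exp (-u) : ℝ) : ℂ) * Complex.exp (-s * u) =
     LSeries (fun n => (residueClass a n : ℂ)) (s+1) / (s+1) := by
    rw [hL, mul_div_cancel_left₀ _ hs1]
    congr 1; ext u
    have e : ((exp u : ℝ) : ℂ) ^ (-(s + 1 + 1)) = Complex.exp (-(s+1+1) * u) := by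
      rw [Complex.cpow_def_of_ne_zero (by simp), ← Complex.ofReal_log (exp_pos u).le, log_exp, mul_comm]
    rw [e, psiRes]
    push_cast
    have e3 : Complex.exp (-u) * Complex.exp (-s * u) = Complex.exp u * Complex.exp (-(s+1+1) * u) := by
      rw [← Complex.exp_add, ← Complex.exp_add]; congr 1; ring
    linear_combination (∑ k ∈ Finset.Icc 1 ⌊exp u⌋₊, ((residueClass a k : ℝ) : ℂ)) * e3
  have hi : IntegrableOn (fun u : ℝ => Complex.exp (-s * u)) (Set.Ioi 0) :=
    integrableOn_exp_mul_complex_Ioi (by simpa using hs) 0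
  have hm : Measurable (fun u : ℝ => psiRes a (exp u) * exp (-u)) :=
    ((psiRes_mono a).measurable.comp measurable_exp).mul (by fun_prop)
  have hiB : IntegrableOn (fun u : ℝ => ((psiRes a (exp u) * exp (-u) : ℝ) : ℂ) * Complex.exp (-s * u)) (Set.Ioi 0) := by
    refine Integrable.bdd_mul (c := log 4 + 4) hi (Complex.measurable_ofReal.comp hm).aestronglyMeasurable (ae_of_all _ fun u => ?_)
    rw [Complex.norm_real, norm_eq_abs, abs_of_nonneg (mul_nonneg (psiRes_nonneg _ _) (exp_pos _).le),
      exp_neg, ← div_eq_mul_inv, div_le_iff₀ (exp_pos u)]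
    exact psiRes_le a (exp_pos u).le
  have hsplit : ∫ u in Set.Ioi (0:ℝ), ((psiRes a (exp u) * exp (-u) - (q.totient : ℝ)⁻¹ : ℝ) : ℂ) * Complex.exp (-s * u)
     = LSeries (fun n => (residueClass a n : ℂ)) (s+1) / (s+1) - A / s := by
    rw [← hA, ← hB, ← integral_sub hiB (hi.const_mul A)]
    congr 1; ext u
    simp only [A]
    push_cast; ring
  rw [hsplit, e0]
  field_simp
  ring

theorem psiRes_tendsto [NeZero q] (ha : IsUnit a) :
    Tendsto (fun x : ℝ => psiRes a x / x) atTop (𝓝 ((q.totient : ℝ)⁻¹)) := by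
  have hm : Measurable (fun u : ℝ => psiRes a (exp u) * exp (-u)) :=
    ((psiRes_mono a).measurable.comp measurable_exp).mul (by fun_prop)
  have := tauber (fun u : ℝ => psiRes a (exp u) * exp (-u)) hm (log 4 + 4) ((q.totient : ℝ)⁻¹)
    (fun u => mul_nonneg (psiRes_nonneg _ _) (exp_pos _).le)
    (fun u => by
      rw [exp_neg, ← div_eq_mul_inv, div_le_iff₀ (exp_pos u)]
      exact psiRes_le a (exp_pos u).le)
    (fun u v huv => by
      have e : exp (-v) * exp (v - u) = exp (-u) := by rw [← exp_add]; congr 1; ring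
      rw [mul_assoc, e]
      exact mul_le_mul_of_nonneg_right (psiRes_mono a (exp_le_exp.2 huv)) (exp_pos _).le)
    (fun s => (LFunctionResidueClassAux a (s + 1) - (q.totient : ℂ)⁻¹) / (s + 1))
    (by
      refine ContinuousOn.div ?_ (by fun_prop) ?_
      · refine ContinuousOn.sub ?_ continuousOn_const
        refine (continuousOn_LFunctionResidueClassAux a).comp (by fun_prop) ?_
        intro s hs
        simpa using hs
      · intro s hs h
        have hs' : 0 ≤ s.re := hs
        have := congrArg Complex.re h; simp at this; linarith)
    (fun s hs => laplace_res a ha s hs)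
  refine (this.comp tendsto_log_atTop).congr' ?_
  filter_upwards [eventually_gt_atTop 0] with x hx
  simp only [Function.comp]
  rw [exp_neg, exp_log hx, div_eq_mul_inv]

noncomputable def piRes (x : ℕ) : ℕ := ((Nat.primesLE x).filter (fun p : ℕ => (p : ZMod q) = a)).card

lemma piRes_log_tendsto [NeZero q] (ha : IsUnit a) :
    Tendsto (fun x : ℕ => (piRes a x : ℝ) * log x / x) atTop (𝓝 ((q.totient : ℝ)⁻¹)) := by
  have h1 := (psiRes_tendsto a ha).comp tendsto_natCast_atTop_atTop
  obtain ⟨C, hC⟩ := Chebyshev.psi_sub_theta_le_mul_sqrt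
  have hO := Chebyshev.primeCounting_sub_theta_div_log_isBigO
  obtain ⟨C2, hC2⟩ := hO.bound
  have hC2' := tendsto_natCast_atTop_atTop.eventually hC2
  -- squeeze
  have l1 : Tendsto (fun x : ℕ => C * (√(x:ℝ) / x)) atTop (𝓝 0) := by
    have : Tendsto (fun x : ℝ => C * (√x)⁻¹) atTop (𝓝 (C * 0)) :=
      (tendsto_inv_atTop_zero.comp tendsto_sqrt_atTop).const_mul C
    rw [mul_zero] at this
    refine (this.comp tendsto_natCast_atTop_atTop).congr fun x => ?_
    simp only [Function.comp]
    rw [sqrt_div_self', one_div]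
  have l2 : Tendsto (fun x : ℕ => C2 * (log (x:ℝ))⁻¹) atTop (𝓝 0) := by
    have : Tendsto (fun x : ℝ => C2 * (log x)⁻¹) atTop (𝓝 (C2 * 0)) :=
      (tendsto_inv_atTop_zero.comp tendsto_log_atTop).const_mul C2
    rw [mul_zero] at this
    exact (this.comp tendsto_natCast_atTop_atTop)
  have key : ∀ᶠ x : ℕ in atTop, psiRes a x / x - C * (√(x:ℝ) / x) ≤ (piRes a x : ℝ) * log x / x ∧
      (piRes a x : ℝ) * log x / x ≤ psiRes a x / x + C2 * (log (x:ℝ))⁻¹ := by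
    filter_upwards [hC2', eventually_ge_atTop 3] with x hx hx3
    have hx0 : (0:ℝ) < x := by positivity
    have hlog : 0 < log (x:ℝ) := log_pos (by exact_mod_cast (by omega : 1 < x))
    set th := ∑ p ∈ (Nat.primesLE x).filter (fun p : ℕ => (p : ZMod q) = a), log p with hth
    have ths : psiRes a x - th = ∑ n ∈ (Finset.Ioc 0 x).filter (fun n => ¬ n.Prime), residueClass a n := by
      have e1 : psiRes a x = ∑ n ∈ Finset.Ioc 0 x, residueClass a n := by
        simp only [psiRes, Nat.floor_natCast]; rfl
      have e2 : th = ∑ n ∈ (Finset.Ioc 0 x).filter (fun n => n.Prime), residueClass a n := by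
        rw [hth]
        have : Nat.primesLE x = (Finset.Ioc 0 x).filter (fun n => n.Prime) := by
          ext p; simp [Nat.mem_primesLE]; intro h _; exact h.pos
        rw [this, Finset.sum_filter]
        refine Finset.sum_congr rfl fun p hp => ?_
        simp only [residueClass, Set.indicator_apply, Set.mem_ofPred_eq]
        split_ifs
        · rw [ArithmeticFunction.vonMangoldt_apply_prime (Finset.mem_filter.1 hp).2]
        · rfl
      rw [e1, e2, ← Finset.sum_filter_add_sum_filter_not (Finset.Ioc 0 x) (fun n => n.Prime)]; ring
    have t0 : 0 ≤ psiRes a x - th := by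
      rw [ths]; exact Finset.sum_nonneg fun _ _ => residueClass_nonneg a _
    have t1 : psiRes a x - th ≤ C * √x := by
      refine le_trans ?_ (hC x)
      rw [ths, Chebyshev.psi_sub_theta_eq_sum_not_prime, Nat.floor_natCast]
      exact Finset.sum_le_sum fun _ _ => residueClass_le a _
    have lelog : ∀ p ∈ Nat.primesLE x, 0 ≤ log x - log p := by
      intro p hp
      have hp' := Nat.mem_primesLE.1 hp
      rw [sub_nonneg]
      exact log_le_log (by exact_mod_cast hp'.2.pos) (by exact_mod_cast hp'.1)
    have t2 : (piRes a x : ℝ) * log x - th = ∑ p ∈ (Nat.primesLE x).filter (fun p : ℕ => (p : ZMod q) = a), (log x - log p) := by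
      rw [Finset.sum_sub_distrib, Finset.sum_const, nsmul_eq_mul, piRes]
    have t3 : 0 ≤ (piRes a x : ℝ) * log x - th := by
      rw [t2]; exact Finset.sum_nonneg fun p hp => lelog p (Finset.mem_filter.1 hp).1
    have t4 : (piRes a x : ℝ) * log x - th ≤ (Nat.primeCounting x) * log x - Chebyshev.theta x := by
      rw [t2, Chebyshev.theta_eq_sum_primesLE_log, ← Nat.primesLE_card_eq_primeCounting, ← nsmul_eq_mul, ← Finset.sum_const,
        ← Finset.sum_sub_distrib]
      exact Finset.sum_le_sum_of_subset_of_nonneg (Finset.filter_subset _ _) fun p hp _ => lelog p hp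
    have t5 : (Nat.primeCounting x) * log x - Chebyshev.theta x ≤ C2 * (x / log x) := by
      rw [Nat.floor_natCast, norm_eq_abs, norm_eq_abs, abs_of_nonneg (by positivity : (0:ℝ) ≤ x / log x ^2)] at hx
      have h := (le_abs_self _).trans hx
      have h' := mul_le_mul_of_nonneg_right h hlog.le
      have e : (↑(Nat.primeCounting x) - Chebyshev.theta x / log x) * log x = (Nat.primeCounting x) * log x - Chebyshev.theta x := by
        field_simp
      have e' : C2 * (x / log x ^ 2) * log x = C2 * (x / log x) := by field_simp
      linarith
    constructor
    · rw [sub_le_iff_le_add, ← mul_div_assoc, ← add_div]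
      gcongr
      linarith
    · have e : C2 * (log (x:ℝ))⁻¹ = C2 * (x / log x) / x := by field_simp
      rw [e, ← add_div]
      gcongr
      linarith
  refine tendsto_of_tendsto_of_tendsto_of_le_of_le' (by simpa using h1.sub l1) (by simpa using h1.add l2) 
    (key.mono fun x h => h.1) (key.mono fun x h => h.2)

theorem pnt : Tendsto (fun x : ℕ => (Nat.primeCounting x : ℝ) * log x / x) atTop (𝓝 1) := by
  have := piRes_log_tendsto (q := 1) 0 (isUnit_of_subsingleton _)
  simp only [Nat.totient_one, Nat.cast_one, inv_one] at this
  refine this.congr fun x => ?_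
  rw [← Nat.primesLE_card_eq_primeCounting, piRes, Finset.filter_true_of_mem]
  intro p _
  exact Subsingleton.elim _ _

theorem piRes_density [NeZero q] (ha : IsUnit a) :
    Tendsto (fun x : ℕ => (piRes a x : ℝ) / Nat.primeCounting x) atTop (𝓝 ((q.totient : ℝ)⁻¹)) := by
  have := (piRes_log_tendsto a ha).div pnt one_ne_zero
  rw [div_one] at this
  refine this.congr' ?_
  filter_upwards [eventually_ge_atTop 3] with x hx3
  have hx0 : (0:ℝ) < x := by positivity
  have hlog : 0 < log (x:ℝ) := log_pos (by exact_mod_cast (by omega : 1 < x))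
  simp only [Pi.div_apply]
  rw [div_div_div_cancel_right₀ hx0.ne', mul_div_mul_right _ _ hlog.ne']
end PartB


section PartC
open Real

lemma factorial_dvd_ap (q c M : ℕ) (hq : q.Prime) :
    M.factorial ∣ q ^ M * ∏ m ∈ Finset.range M, (q * m + c) := by
  have hM := Nat.factorial_ne_zero M
  rw [← Nat.ordProj_mul_ordCompl_eq_self M.factorial q]
  refine mul_dvd_mul (pow_dvd_pow _ ?_) ?_
  · haveI := Fact.mk hq
    have h := sub_one_mul_padicValNat_factorial (p := q) M
    rw [Nat.factorization_def _ hq]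
    have h2 : 1 ≤ q - 1 := by have := hq.two_le; omega
    calc padicValNat q M.factorial ≤ (q-1) * padicValNat q M.factorial := Nat.le_mul_of_pos_left _ h2
      _ ≤ M := by rw [h]; omega
  · set N := M.factorial / q ^ M.factorial.factorization q with hN
    have hcop : Nat.Coprime q N := Nat.coprime_ordCompl hq hM
    have hNM : N ∣ M.factorial := Nat.ordCompl_dvd _ _
    have hN0 : N ≠ 0 := fun h => hM (by rw [h] at hNM; exact Nat.eq_zero_of_zero_dvd hNM)
    haveI : NeZero N := ⟨hN0⟩
    have hu : IsUnit (q : ZMod N) := (ZMod.isUnit_iff_coprime q N).2 hcop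
    obtain ⟨u, hu⟩ := hu
    obtain ⟨b, hb⟩ : ∃ b : ℕ, (b : ZMod N) = ((u⁻¹ : (ZMod N)ˣ) : ZMod N) * c := ⟨_, ZMod.natCast_zmod_val _⟩
    rw [← ZMod.natCast_eq_zero_iff]
    have hz : ((b.ascFactorial M : ℕ) : ZMod N) = 0 := by
      rw [ZMod.natCast_eq_zero_iff]
      exact hNM.trans (Nat.factorial_dvd_ascFactorial b M)
    rw [Nat.ascFactorial_eq_prod_range] at hz
    push_cast at hz ⊢
    have : ∏ m ∈ Finset.range M, ((q:ZMod N) * m + c) = ∏ m ∈ Finset.range M, ((q:ZMod N) * (b + m)) := by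
      refine Finset.prod_congr rfl fun m _ => ?_
      rw [mul_add, hb, ← mul_assoc, ← hu, Units.mul_inv, one_mul, add_comm]
    rw [this, Finset.prod_mul_distrib, hz, mul_zero]

lemma card_ap_primes (q c M : ℕ) (hq : q.Prime) (hc0 : 0 < c) (hc : c ≤ 2 * q) (hM : 1 < M) (s : Finset ℕ)
    (hs : ∀ p ∈ s, p.Prime ∧ M < p ∧ p ≠ q ∧ ∃ m < M, p = q * m + c) :
    (s.card : ℝ) * log M ≤ 3 * M * log q := by
  obtain ⟨R, hR⟩ := factorial_dvd_ap q c M hq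
  have hMf := Nat.factorial_pos M
  have hprod_pos : 0 < ∏ m ∈ Finset.range M, (q * m + c) := Finset.prod_pos fun m _ => by omega
  have hRpos : 0 < R := by
    rcases Nat.eq_zero_or_pos R with h | h
    · rw [h, mul_zero] at hR
      have : 0 < q ^ M * ∏ m ∈ Finset.range M, (q * m + c) := Nat.mul_pos (pow_pos hq.pos _) hprod_pos
      omega
    · exact h
  have hdvd : ∏ p ∈ s, p ∣ R := by
    refine Finset.prod_primes_dvd _ (fun p hp => (hs p hp).1.prime) fun p hp => ?_
    obtain ⟨hpp, hMp, hpq, m, hm, hpm⟩ := hs p hp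
    have h1 : p ∣ M.factorial * R := by
      rw [← hR]
      refine Dvd.dvd.mul_left ?_ _
      have := Finset.dvd_prod_of_mem (fun m => q * m + c) (Finset.mem_range.2 hm)
      rw [← hpm] at this
      exact this
    rcases (hpp.dvd_mul).1 h1 with h | h
    · exact absurd ((hpp.dvd_factorial).1 h) (by omega)
    · exact h
  have hub : R ≤ q ^ (3 * M) := by
    have h1 : ∏ m ∈ Finset.range M, (q * m + c) ≤ (2*q)^M * M.factorial := by
      calc ∏ m ∈ Finset.range M, (q * m + c) ≤ ∏ m ∈ Finset.range M, (2 * q * (m+1)) :=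
            Finset.prod_le_prod' fun m _ => by nlinarith
        _ = _ := by rw [Finset.prod_mul_distrib, Finset.prod_const, Finset.card_range, Finset.prod_range_add_one_eq_factorial]
    have h2 : M.factorial * R ≤ M.factorial * q ^ (3*M) := by
      rw [← hR]
      calc _ ≤ q^M * ((2*q)^M * M.factorial) := Nat.mul_le_mul_left _ h1
        _ ≤ q^M * ((q*q)^M * M.factorial) := by
            gcongr; exact hq.two_le
        _ = _ := by rw [mul_pow, pow_mul']; ring
    exact Nat.le_of_mul_le_mul_left h2 hMf
  have hpow : M ^ s.card ≤ q ^ (3 * M) := by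
    calc M ^ s.card ≤ ∏ p ∈ s, p := Finset.pow_card_le_prod _ _ _ (fun p hp => (hs p hp).2.1.le)
      _ ≤ R := Nat.le_of_dvd hRpos hdvd
      _ ≤ _ := hub
  have := log_le_log (by positivity) (Nat.cast_le (α := ℝ).2 hpow)
  push_cast at this
  rw [log_pow, log_pow] at this
  push_cast at this
  exact this

lemma ap_bound_gen : ∃ X : ℕ, ∀ x ≥ X, ∀ q c : ℕ, q.Prime → 0 < c → c ≤ 2 * q → q * q ≤ x → 
    ∀ s : Finset ℕ, (∀ p ∈ s, p.Prime ∧ p ≠ q ∧ p ≤ x ∧ (x / q + 1 < p → ∃ m < x / q + 1, p = q * m + c)) →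
    (s.card : ℝ) ≤ 28 * (x / log x) * (log q / q) := by
  have h1 := Chebyshev.eventually_primeCounting_le (ε := 1) one_pos
  have h2 : ∀ᶠ x : ℕ in atTop, ∀ y : ℝ, √(x:ℝ) ≤ y → (Nat.primeCounting ⌊y⌋₊ : ℝ) ≤ (log 4 + 1) * y / log y := by
    obtain ⟨Y, hY⟩ := eventually_atTop.1 h1
    have := (tendsto_sqrt_atTop.comp (tendsto_natCast_atTop_atTop (R := ℝ))).eventually (eventually_ge_atTop Y)
    filter_upwards [this] with x hx y hy
    exact hY y (le_trans hx hy)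
  obtain ⟨X, hX⟩ := eventually_atTop.1 (h2.and (eventually_ge_atTop 4))
  refine ⟨X, fun x hx q c hq hc0 hc hqx s hs => ?_⟩
  obtain ⟨hpi, hx4⟩ := hX x hx
  set M := x / q + 1 with hM
  have hq2 := hq.two_le
  have hqM : q < M := by
    have : q ≤ x / q := (Nat.le_div_iff_mul_le hq.pos).2 hqx
    omega
  have hM1 : x < M * q := by
    rw [hM, mul_comm]; exact Nat.lt_mul_div_succ x hq.pos
  have hMM : x < M * M := hM1.trans_le (Nat.mul_le_mul_left _ hqM.le)
  have hMub : M * q ≤ 2 * x := by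
    have : x / q * q ≤ x := Nat.div_mul_le_self x q
    rw [hM]; nlinarith
  have hM0 : (0:ℝ) < M := by positivity
  have hlx : 0 < log (x:ℝ) := log_pos (by exact_mod_cast (by omega : 1 < x))
  have hlM : log x / 2 ≤ log M := by
    have : log (x:ℝ) ≤ log ((M:ℝ) * M) := log_le_log (by positivity) (by exact_mod_cast hMM.le)
    rw [log_mul (by positivity) (by positivity)] at this
    linarith
  have hlM0 : 0 < log (M:ℝ) := by linarith
  have hlq : 0.69 ≤ log (q:ℝ) := by
    have : log 2 ≤ log (q:ℝ) := log_le_log (by norm_num) (by exact_mod_cast hq2)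
    linarith [log_two_gt_d9]
  have a1 : ((s.filter (fun p => M < p)).card : ℝ) * log M ≤ 3 * M * log q := by
    refine card_ap_primes q c M hq hc0 hc (by omega) _ fun p hp => ?_
    obtain ⟨hp1, hp2⟩ := Finset.mem_filter.1 hp
    obtain ⟨b1, b2, b3, b4⟩ := hs p hp1
    exact ⟨b1, hp2, b2, b4 hp2⟩
  have a2 : ((s.filter (fun p => ¬ M < p)).card : ℝ) ≤ Nat.primeCounting M := by
    rw [← Nat.primesLE_card_eq_primeCounting]
    refine Nat.cast_le.2 (Finset.card_le_card fun p hp => ?_)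
    obtain ⟨hp1, hp2⟩ := Finset.mem_filter.1 hp
    exact Nat.mem_primesLE.2 ⟨not_lt.1 hp2, (hs p hp1).1⟩
  have a3 := hpi M (by
    rw [sqrt_le_left hM0.le, sq]; exact_mod_cast hMM.le)
  rw [Nat.floor_natCast] at a3
  have hl4 : log 4 = 2 * log 2 := by
    rw [show (4:ℝ) = 2^2 by norm_num, log_pow]; norm_num
  have a4 : log 4 + 1 ≤ 4 * log (q:ℝ) := by
    rw [hl4]; linarith [log_two_lt_d9]
  have a5 : (s.card : ℝ) ≤ 7 * log q * (M / log M) := by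
    have e : (s.card : ℝ) = (s.filter (fun p => M < p)).card + (s.filter (fun p => ¬ M < p)).card := by
      exact_mod_cast (Finset.card_filter_add_card_filter_not _).symm
    have a1' : ((s.filter (fun p => M < p)).card : ℝ) ≤ 3 * log q * (M / log M) := by
      rw [← mul_div_assoc, le_div_iff₀ hlM0]; linarith
    have a3' : (log 4 + 1) * M / log M ≤ 4 * log q * (M / log M) := by
      rw [mul_div_assoc]; gcongr
    rw [e]; linarith
  refine a5.trans ?_
  have hq0 : (0:ℝ) < q := by positivity
  have a6 : (M:ℝ) / log M ≤ (2 * x / q) / (log x / 2) := by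
    gcongr
    rw [le_div_iff₀ hq0]; exact_mod_cast hMub
  calc 7 * log q * (M / log M) ≤ 7 * log q * ((2 * x / q) / (log x / 2)) := by gcongr
    _ = _ := by field_simp; ring

lemma ap_bound_sub (ℓ : ℕ) (hℓ : 0 < ℓ) : ∃ X : ℕ, ∀ x ≥ X, ∀ q : ℕ, q.Prime → ℓ < q → q * q ≤ x → 
    (((Nat.primesLE x).filter (fun p => ℓ < p ∧ q ∣ p - ℓ)).card : ℝ) ≤ 28 * (x / log x) * (log q / q) := by
  obtain ⟨X, hX⟩ := ap_bound_gen
  refine ⟨X, fun x hx q hq hlq hqx => hX x hx q (q + ℓ) hq (by omega) (by omega) hqx _ fun p hp => ?_⟩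
  obtain ⟨hp1, hp2, k, hk⟩ := Finset.mem_filter.1 hp
  obtain ⟨hpx, hpp⟩ := Nat.mem_primesLE.1 hp1
  have hk0 : k ≠ 0 := by rintro rfl; omega
  obtain ⟨k, rfl⟩ := Nat.exists_eq_succ_of_ne_zero hk0
  refine ⟨hpp, ?_, hpx, fun _ => ⟨k, ?_, ?_⟩⟩
  · rintro rfl
    have h1 : p ∣ p - ℓ := ⟨_, hk⟩
    have := Nat.le_of_dvd (by omega) h1
    omega
  · have : k ≤ x / q := (Nat.le_div_iff_mul_le hq.pos).2 (by rw [Nat.succ_eq_add_one] at hk; nlinarith [Nat.sub_le p ℓ])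
    omega
  · rw [Nat.succ_eq_add_one, mul_add] at hk; omega

lemma ap_bound_add (ℓ : ℕ) (hℓ : 0 < ℓ) : ∃ X : ℕ, ∀ x ≥ X, ∀ q : ℕ, q.Prime → ℓ < q → q * q ≤ x → 
    (((Nat.primesLE x).filter (fun p => ℓ < p ∧ q ∣ p + ℓ)).card : ℝ) ≤ 28 * (x / log x) * (log q / q) := by
  obtain ⟨X, hX⟩ := ap_bound_gen
  refine ⟨X, fun x hx q hq hlq hqx => hX x hx q (q - ℓ) hq (by omega) (by omega) hqx _ fun p hp => ?_⟩
  obtain ⟨hp1, hp2, k, hk⟩ := Finset.mem_filter.1 hp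
  obtain ⟨hpx, hpp⟩ := Nat.mem_primesLE.1 hp1
  have hk0 : k ≠ 0 := by rintro rfl; omega
  obtain ⟨k, rfl⟩ := Nat.exists_eq_succ_of_ne_zero hk0
  rw [Nat.succ_eq_add_one, mul_add] at hk
  refine ⟨hpp, ?_, hpx, fun _ => ⟨k, ?_, ?_⟩⟩
  · rintro rfl
    have h1 : p ∣ p + ℓ := ⟨k+1, by rw [hk]; ring⟩
    have := Nat.le_of_dvd hℓ ((Nat.dvd_add_right dvd_rfl).1 h1)
    omega
  · have : k ≤ x / q := (Nat.le_div_iff_mul_le hq.pos).2 (by rw [mul_comm]; omega)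
    omega
  · omega
end PartC


section PartC2
open Real

noncomputable def ww (q : ℕ) : ℝ := -log (1 - 1 / (q:ℝ))

lemma ww_ge (q : ℕ) (hq : 2 ≤ q) : 1 / (q:ℝ) ≤ ww q := by
  have h2 : (2:ℝ) ≤ q := by exact_mod_cast hq
  have h0 : (0:ℝ) < 1 - 1 / q := by
    rw [sub_pos, div_lt_one (by linarith)]; linarith
  have := log_le_sub_one_of_pos h0
  unfold ww; linarith

lemma ww_le (q : ℕ) (hq : 2 ≤ q) : ww q ≤ 2 / (q:ℝ) := by
  have h2 : (2:ℝ) ≤ q := by exact_mod_cast hq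
  have h0 : (0:ℝ) < 1 - 1 / q := by
    rw [sub_pos, div_lt_one (by linarith)]; linarith
  have := one_sub_inv_le_log_of_pos h0
  have e : (1 - 1 / (q:ℝ))⁻¹ = 1 + 1 / (q - 1) := by
    have : (q:ℝ) - 1 ≠ 0 := by linarith
    field_simp
    ring
  have e2 : 1 / ((q:ℝ) - 1) ≤ 2 / q := by
    rw [div_le_div_iff₀ (by linarith) (by linarith)]; linarith
  unfold ww; linarith

lemma ww_nonneg (q : ℕ) (hq : 2 ≤ q) : 0 ≤ ww q := le_trans (by positivity) (ww_ge q hq)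

lemma summable_log_sq : Summable (fun n : ℕ => log n / (n:ℝ) ^ 2) := by
  have h : Summable (fun n : ℕ => 2 * (1 / (n:ℝ) ^ (3/2 : ℝ))) :=
    ((Real.summable_one_div_nat_rpow (p := 3/2)).2 (by norm_num)).mul_left 2
  refine Summable.of_nonneg_of_le (fun n => div_nonneg (log_natCast_nonneg n) (by positivity)) (fun n => ?_) h
  rcases Nat.eq_zero_or_pos n with rfl | hn
  · simp
  have hn0 : (0:ℝ) < n := by exact_mod_cast hn
  have h1 := log_le_rpow_div hn0.le (ε := 1/2) (by norm_num)
  have e : (n:ℝ) ^ 2 = (n:ℝ) ^ (3/2:ℝ) * (n:ℝ) ^ (1/2:ℝ) := by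
    rw [← rpow_add hn0]; norm_num
  rw [e, div_le_iff₀ (by positivity)]
  calc log n ≤ (n:ℝ) ^ (1/2:ℝ) / (1/2) := h1
    _ = _ := by field_simp

lemma large_part (n x : ℕ) (hn : n ≠ 0) (hx : 1 ≤ x) (hnx : n ≤ 2 * x) :
    ∑ r ∈ n.primeFactors.filter (fun r => x < r * r), ww r ≤ (log (2 * x) / log 2) * (2 / √x) := by
  have hx0 : (0:ℝ) < x := by exact_mod_cast hx
  have hl2 : 0 < log 2 := log_pos (by norm_num)
  have h1 : ∀ r ∈ n.primeFactors.filter (fun r => x < r * r), ww r ≤ 2 / √x := by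
    intro r hr
    obtain ⟨hr1, hr2⟩ := Finset.mem_filter.1 hr
    have hp := Nat.prime_of_mem_primeFactors hr1
    refine (ww_le r hp.two_le).trans ?_
    have : √(x:ℝ) ≤ r := by
      rw [sqrt_le_left (by positivity), sq]; exact_mod_cast hr2.le
    gcongr
  refine (Finset.sum_le_card_nsmul _ _ _ h1).trans ?_
  rw [nsmul_eq_mul]
  gcongr
  rw [le_div_iff₀ hl2, ← log_pow]
  refine log_le_log (by positivity) ?_
  have a1 : 2 ^ (n.primeFactors.filter (fun r => x < r * r)).card ≤ 2 ^ n.primeFactors.card :=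
    Nat.pow_le_pow_right (by norm_num) (Finset.card_filter_le _ _)
  have a2 : 2 ^ n.primeFactors.card ≤ ∏ r ∈ n.primeFactors, r :=
    Finset.pow_card_le_prod _ _ _ (fun r hr => (Nat.prime_of_mem_primeFactors hr).two_le)
  have a3 := Nat.le_of_dvd (Nat.pos_of_ne_zero hn) (Nat.prod_primeFactors_dvd n)
  exact_mod_cast (a1.trans a2).trans (a3.trans hnx)

lemma large_tendsto : Tendsto (fun x : ℕ => (log (2 * x) / log 2) * (2 / √(x:ℝ))) atTop (𝓝 0) := by
  have h : Tendsto (fun x : ℝ => log x / x ^ (1/2:ℝ)) atTop (𝓝 0) :=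
    (isLittleO_log_rpow_atTop (by norm_num : (0:ℝ) < 1/2)).tendsto_div_nhds_zero
  have h2 : Tendsto (fun x : ℕ => 2 * (x:ℝ)) atTop atTop :=
    (tendsto_natCast_atTop_atTop (R := ℝ)).const_mul_atTop (by norm_num)
  have h3 := (h.comp h2).const_mul (2 * √2 / log 2)
  rw [mul_zero] at h3
  refine h3.congr' ?_
  filter_upwards [eventually_gt_atTop 0] with x hx
  simp only [Function.comp]
  rw [← sqrt_eq_rpow, sqrt_mul (by norm_num)]
  have : √(2:ℝ) ≠ 0 := by positivity
  have : √(x:ℝ) ≠ 0 := by positivity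
  field_simp

lemma tail_gen (ℓ : ℕ) (g : ℕ → ℕ) (hg : ∀ p x, ℓ < p → p ≤ x → g p ≠ 0 ∧ g p ≤ 2 * x)
    (hb : ∃ X : ℕ, ∀ x ≥ X, ∀ q : ℕ, q.Prime → ℓ < q → q * q ≤ x → 
    (((Nat.primesLE x).filter (fun p => ℓ < p ∧ q ∣ g p)).card : ℝ) ≤ 28 * (x / log x) * (log q / q))
    (ε δ : ℝ) (hε : 0 < ε) (hδ : 0 < δ) :
    ∃ Y : ℕ, ∀ y ≥ Y, ∀ᶠ x : ℕ in atTop,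
      (((Nat.primesLE x).filter (fun p => ℓ < p ∧ 
        ε < ∑ r ∈ (g p).primeFactors.filter (fun r => y < r), ww r)).card : ℝ) ≤ δ * Nat.primeCounting x := by
  obtain ⟨X, hX⟩ := hb
  set η := ε * δ / 224 with hη
  have hη0 : 0 < η := by positivity
  obtain ⟨s, hs⟩ := summable_iff_vanishing_norm.1 summable_log_sq η hη0
  refine ⟨ℓ + s.sup id, fun y hy => ?_⟩
  have hpnt := pnt.eventually (lt_mem_nhds (show (1/2:ℝ) < 1 by norm_num))
  have hlt := large_tendsto.eventually (gt_mem_nhds (show (0:ℝ) < ε / 2 by positivity))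
  filter_upwards [hpnt, hlt, eventually_ge_atTop X, eventually_ge_atTop 2] with x h1 h2 h3 h4
  have hx0 : (0:ℝ) < x := by positivity
  have hlx : 0 < log x := log_pos (by exact_mod_cast h4)
  have h1' : (x:ℝ) / log x ≤ 2 * Nat.primeCounting x := by
    rw [lt_div_iff₀ hx0] at h1
    rw [div_le_iff₀ hlx]; linarith
  set A := (Nat.primesLE x).filter (fun p => ℓ < p) with hA
  set R := (Nat.primesLE x).filter (fun r => y < r ∧ r * r ≤ x) with hR
  set B := (Nat.primesLE x).filter (fun p => ℓ < p ∧ 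
        ε < ∑ r ∈ (g p).primeFactors.filter (fun r => y < r), ww r) with hB
  have hRp : ∀ r ∈ R, r.Prime ∧ y < r ∧ r * r ≤ x := fun r hr => by
    obtain ⟨a, b, c⟩ := Finset.mem_filter.1 hr
    exact ⟨(Nat.mem_primesLE.1 a).2, b, c⟩
  have hBA : B ⊆ A := fun p hp => by
    obtain ⟨a, b, c⟩ := Finset.mem_filter.1 hp
    exact Finset.mem_filter.2 ⟨a, b⟩
  have hBp : ∀ p ∈ B, ε / 2 ≤ ∑ r ∈ R.filter (fun r => r ∣ g p), ww r := fun p hp => by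
    obtain ⟨a, b, c⟩ := Finset.mem_filter.1 hp
    obtain ⟨g0, g2⟩ := hg p x b (Nat.mem_primesLE.1 a).1
    have hl := large_part (g p) x g0 (by omega) g2
    have : ∑ r ∈ (g p).primeFactors.filter (fun r => y < r), ww r ≤ 
       ∑ r ∈ R.filter (fun r => r ∣ g p), ww r + ∑ r ∈ (g p).primeFactors.filter (fun r => x < r * r), ww r := by
      rw [← Finset.sum_filter_add_sum_filter_not ((g p).primeFactors.filter (fun r => y < r)) (fun r => r * r ≤ x)]
      refine add_le_add ?_ ?_
      · refine Finset.sum_le_sum_of_subset_of_nonneg (fun r hr => ?_) (fun r hr _ => ?_)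
        · simp only [Finset.mem_filter, Nat.mem_primeFactors] at hr
          simp only [hR, Finset.mem_filter, Nat.mem_primesLE]
          exact ⟨⟨⟨by nlinarith [hr.1.1.1.two_le], hr.1.1.1⟩, hr.1.2, hr.2⟩, hr.1.1.2.1⟩
        · exact ww_nonneg r (hRp r (Finset.mem_filter.1 hr).1).1.two_le
      · refine Finset.sum_le_sum_of_subset_of_nonneg (fun r hr => ?_) (fun r hr _ => ?_)
        · simp only [Finset.mem_filter] at hr ⊢
          exact ⟨hr.1.1, not_le.1 hr.2⟩
        · exact ww_nonneg r (Nat.prime_of_mem_primeFactors (Finset.mem_filter.1 hr).1).two_le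
    linarith
  have key : (B.card : ℝ) * (ε / 2) ≤ 56 * (x / log x) * η := by
    calc (B.card : ℝ) * (ε / 2) = ∑ p ∈ B, ε / 2 := by rw [Finset.sum_const, nsmul_eq_mul]
      _ ≤ ∑ p ∈ B, ∑ r ∈ R.filter (fun r => r ∣ g p), ww r := Finset.sum_le_sum hBp
      _ ≤ ∑ p ∈ A, ∑ r ∈ R.filter (fun r => r ∣ g p), ww r := by
        refine Finset.sum_le_sum_of_subset_of_nonneg hBA fun p _ _ => Finset.sum_nonneg fun r hr => ?_
        exact ww_nonneg r (hRp r (Finset.mem_filter.1 hr).1).1.two_le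
      _ = ∑ r ∈ R, ∑ p ∈ A.filter (fun p => r ∣ g p), ww r := by
        simp only [Finset.sum_filter]
        rw [Finset.sum_comm]
      _ ≤ ∑ r ∈ R, 56 * (x / log x) * (log r / (r:ℝ)^2) := by
        refine Finset.sum_le_sum fun r hr => ?_
        obtain ⟨hr1, hr2, hr3⟩ := hRp r hr
        have := hX x h3 r hr1 (by omega) hr3
        rw [Finset.sum_const, nsmul_eq_mul, hA, Finset.filter_filter]
        have hr0 : (0:ℝ) < r := by exact_mod_cast hr1.pos
        calc _ ≤ (28 * (x / log x) * (log r / r)) * (2 / r) := by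
              refine mul_le_mul this (ww_le r hr1.two_le) (ww_nonneg r hr1.two_le) ?_
              have := log_natCast_nonneg r
              positivity
          _ = _ := by field_simp; ring
      _ = 56 * (x / log x) * ∑ r ∈ R, (log r / (r:ℝ)^2) := by rw [Finset.mul_sum]
      _ ≤ 56 * (x / log x) * η := by
        gcongr
        refine (le_abs_self _).trans (hs R ?_).le
        rw [Finset.disjoint_left]
        intro r hr hrs
        have : r ≤ s.sup id := Finset.le_sup (f := id) hrs
        have := (hRp r hr).2.1
        omega
  have key2 : (B.card : ℝ) * (ε / 2) ≤ (δ * Nat.primeCounting x) * (ε / 2) := by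
    refine key.trans ?_
    calc 56 * (x / log x) * η ≤ 56 * (2 * Nat.primeCounting x) * η := by gcongr
      _ = _ := by rw [hη]; ring
  exact le_of_mul_le_mul_right key2 (by positivity)

noncomputable def TT (ℓ y p : ℕ) : ℝ :=
  ∑ r ∈ (p - ℓ).primeFactors.filter (fun r => y < r), ww r +
  ∑ r ∈ (p + ℓ).primeFactors.filter (fun r => y < r), ww r

lemma tail_bound (ℓ : ℕ) (hℓ : 0 < ℓ) (ε δ : ℝ) (hε : 0 < ε) (hδ : 0 < δ) :
    ∃ Y : ℕ, ∀ y ≥ Y, ∀ᶠ x : ℕ in atTop,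
      (((Nat.primesLE x).filter (fun p => ℓ < p ∧ ε < TT ℓ y p)).card : ℝ) ≤ δ * Nat.primeCounting x := by
  obtain ⟨Y1, h1⟩ := tail_gen ℓ (fun p => p - ℓ) (fun p x h1 h2 => ⟨by omega, by omega⟩) (ap_bound_sub ℓ hℓ)
    (ε / 2) (δ / 2) (by positivity) (by positivity)
  obtain ⟨Y2, h2⟩ := tail_gen ℓ (fun p => p + ℓ) (fun p x h1 h2 => ⟨by omega, by omega⟩) (ap_bound_add ℓ hℓ)
    (ε / 2) (δ / 2) (by positivity) (by positivity)
  refine ⟨max Y1 Y2, fun y hy => ?_⟩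
  filter_upwards [h1 y (le_trans (le_max_left _ _) hy), h2 y (le_trans (le_max_right _ _) hy)] with x a b
  refine le_trans (Nat.cast_le.2 ((Finset.card_le_card ?_).trans (Finset.card_union_le _ _))) 
    (le_trans (by push_cast; exact add_le_add a b) (by linarith))
  intro p hp
  simp only [Finset.mem_filter, Finset.mem_union] at hp ⊢
  obtain ⟨hp, hl, ht⟩ := hp
  unfold TT at ht
  by_contra hcon
  push Not at hcon
  linarith [hcon.1 hp hl, hcon.2 hp hl]
end PartC2


section PartD
open Finset

lemma centralBinom_sq (n : ℕ) : (2 * n + 1) * n.centralBinom ^ 2 ≤ 16 ^ n := by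
  induction n with
  | zero => simp
  | succ n ih =>
    have h := Nat.succ_mul_centralBinom_succ n
    have h2 : (n + 1)^2 * ((2 * (n + 1) + 1) * (n+1).centralBinom ^ 2) ≤ (n+1)^2 * 16 ^ (n + 1) := by
      calc (n + 1)^2 * ((2 * (n + 1) + 1) * (n+1).centralBinom ^ 2) 
          = (2 * n + 3) * ((n + 1) * (n+1).centralBinom)^2 := by ring
        _ = (4 * (2 * n + 3) * (2 * n + 1)) * ((2 * n + 1) * n.centralBinom ^ 2) := by rw [h]; ring
        _ ≤ (16 * (n + 1)^2) * 16 ^ n := Nat.mul_le_mul (by nlinarith) ih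
        _ = _ := by ring
    exact Nat.le_of_mul_le_mul_left h2 (by positivity)

lemma choose_half_small (δ : ℝ) (hδ : 0 < δ) : ∃ K : ℕ, ∀ k ≥ K, (k.choose (k/2) : ℝ) ≤ δ * 2 ^ k := by
  obtain ⟨N, hN⟩ := exists_nat_gt (1 / δ ^ 2)
  have main : ∀ n ≥ N, (n.centralBinom : ℝ) ≤ δ * 4 ^ n := by
    intro n hn
    have h1 : (2 * n + 1 : ℝ) * n.centralBinom ^ 2 ≤ 16 ^ n := by exact_mod_cast centralBinom_sq n
    have h2 : (N:ℝ) ≤ n := by exact_mod_cast hn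
    have h3 : 1 ≤ δ ^ 2 * (2 * n + 1 : ℝ) := by
      rw [div_lt_iff₀ (by positivity)] at hN
      nlinarith [sq_nonneg δ]
    refine le_of_sq_le_sq ?_ (by positivity)
    calc (n.centralBinom : ℝ)^2 ≤ δ ^ 2 * (2 * n + 1 : ℝ) * n.centralBinom ^ 2 := le_mul_of_one_le_left (by positivity) h3
      _ = δ^2 * ((2 * n + 1 : ℝ) * n.centralBinom ^ 2) := by ring
      _ ≤ δ^2 * 16 ^ n := by gcongr
      _ = _ := by rw [mul_pow, ← pow_mul, mul_comm n 2, pow_mul]; norm_num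
  refine ⟨2 * N + 1, fun k hk => ?_⟩
  obtain ⟨n, rfl | rfl⟩ := Nat.even_or_odd' k
  · have := main n (by omega)
    rw [Nat.mul_div_cancel_left n (by norm_num), pow_mul]
    rw [Nat.centralBinom_eq_two_mul_choose] at this
    norm_num; exact this
  · have := main n (by omega)
    have e : (2 * n + 1) / 2 = n := by omega
    have hle : (2 * n + 1).choose n ≤ 2 * n.centralBinom := by
      rcases n with _ | n
      · simp
      · rw [Nat.choose_succ_succ, Nat.succ_eq_add_one]
        have := Nat.choose_le_centralBinom n (n+1)
        have := Nat.choose_le_centralBinom (n+1) (n+1)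
        omega
    rw [e, pow_succ, pow_mul]
    have hle' : ((2 * n + 1).choose n : ℝ) ≤ 2 * n.centralBinom := by exact_mod_cast hle
    norm_num; linarith

lemma LO_core {α : Type*} [Fintype α] [DecidableEq α] (v : α → ℝ) (c ε : ℝ) (hv : ∀ i, ε < |v i|) :
    (univ.filter (fun J : Finset α => |c - 2 * ∑ i ∈ J, v i| ≤ ε)).card ≤ 
      (Fintype.card α).choose (Fintype.card α / 2) := by
  set N : Finset α := univ.filter (fun i => v i < 0)
  set A := univ.filter (fun J : Finset α => |c - 2 * ∑ i ∈ J, v i| ≤ ε) with hA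
  have hinj : Function.Injective (fun J : Finset α => symmDiff J N) := symmDiff_left_injective N
  have hsum : ∀ J : Finset α, ∑ i ∈ J, v i = ∑ i ∈ symmDiff J N, |v i| - ∑ i ∈ N, |v i| := by
    intro J
    rw [eq_sub_iff_add_eq]
    have e : ∀ s : Finset α, ∀ f : α → ℝ, ∑ i ∈ s, f i = ∑ i, if i ∈ s then f i else 0 := by
      intro s f; rw [Finset.sum_ite_mem, univ_inter]
    rw [e J, e N, e (symmDiff J N), ← Finset.sum_add_distrib]
    refine Finset.sum_congr rfl fun i _ => ?_
    have hN : i ∈ N ↔ v i < 0 := by simp [N]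
    simp only [Finset.mem_symmDiff, hN]
    by_cases h1 : i ∈ J <;> by_cases h2 : v i < 0
    · simp [h1, h2, abs_of_neg h2]
    · simp [h1, h2, abs_of_nonneg (not_lt.1 h2)]
    · simp [h1, h2]
    · simp [h1, h2]
  rw [← card_image_of_injective A hinj]
  refine IsAntichain.sperner (𝒜 := A.image (fun J : Finset α => symmDiff J N)) ?_
  intro J' hJ' K' hK' hne hle
  simp only [coe_image, Set.mem_image, mem_coe, hA, mem_filter, mem_univ, true_and] at hJ' hK'
  obtain ⟨J, hJ, rfl⟩ := hJ'
  obtain ⟨K, hK, rfl⟩ := hK'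
  rw [hsum, abs_le] at hJ hK
  have hd := Finset.sum_sdiff (f := fun i => |v i|) hle
  have hss : symmDiff J N ⊂ symmDiff K N := lt_of_le_of_ne hle hne
  obtain ⟨i, hi⟩ := Finset.sdiff_nonempty.2 hss.2
  have := Finset.single_le_sum (f := fun i => |v i|) (fun i _ => abs_nonneg _) hi
  have := hv i
  linarith [hJ.1, hK.2, hJ.2, hK.1]

lemma LO_gen {ι : Type*} [DecidableEq ι] (I : Finset ι) (v : ι → ℝ) (c ε : ℝ) 
    (hv : ∀ i ∈ I, v i ≠ 0 → ε < |v i|) :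
    (I.powerset.filter (fun J : Finset ι => |c - 2 * ∑ i ∈ J, v i| ≤ ε)).card ≤ 
      (I.filter (fun i => v i ≠ 0)).card.choose ((I.filter (fun i => v i ≠ 0)).card / 2) *
       2 ^ (I.filter (fun i => ¬ v i ≠ 0)).card := by
  set I1 := I.filter (fun i => v i ≠ 0) with hI1
  set I0 := I.filter (fun i => ¬ v i ≠ 0) with hI0
  have h := LO_core (fun i : I1 => v i) c ε (fun i => hv i (mem_filter.1 i.2).1 (mem_filter.1 i.2).2)
  rw [Fintype.card_coe] at h
  set A := univ.filter (fun J : Finset I1 => |c - 2 * ∑ i ∈ J, v i| ≤ ε) with hA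
  calc _ ≤ (A ×ˢ I0.powerset).card := by
        refine Finset.card_le_card_of_injOn (fun J => (J.subtype (· ∈ I1), J ∩ I0)) ?_ ?_
        · intro J hJ
          simp only [coe_filter, mem_powerset, Set.mem_ofPred_eq] at hJ
          simp only [coe_product, Set.mem_prod, mem_coe, mem_powerset, hA, mem_filter, mem_univ, true_and]
          refine ⟨?_, inter_subset_right⟩
          rw [Finset.sum_subtype_eq_sum_filter, Finset.sum_filter_of_ne]
          · exact hJ.2
          · intro i hi hne
            exact mem_filter.2 ⟨hJ.1 hi, hne⟩
        · intro J hJ K hK hJK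
          simp only [coe_filter, mem_powerset, Set.mem_ofPred_eq] at hJ hK
          simp only [Prod.mk.injEq] at hJK
          ext i
          by_cases hi : i ∈ I
          · by_cases h0 : v i = 0
            · have := Finset.ext_iff.1 hJK.2 i
              have hi0 : i ∈ I0 := mem_filter.2 ⟨hi, by simpa using h0⟩
              simpa [hi0] using this
            · have hi1 : i ∈ I1 := mem_filter.2 ⟨hi, h0⟩
              have := Finset.ext_iff.1 hJK.1 ⟨i, hi1⟩
              simpa using this
          · exact ⟨fun h => (hi (hJ.1 h)).elim, fun h => (hi (hK.1 h)).elim⟩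
    _ = A.card * 2 ^ I0.card := by rw [card_product, card_powerset]
    _ ≤ _ := Nat.mul_le_mul_right _ h

end PartD


section PartD2
open Finset

lemma flip_avg {ι : Type*} [Fintype ι] [DecidableEq ι] (W : ι → Finset ℕ) (V : ι → ℕ → ℝ) (σ : ι → ℕ → ℕ)
    (hσ : ∀ i, ∀ b ∈ W i, σ i b ∈ W i ∧ σ i (σ i b) = b ∧ V i (σ i b) = - V i b)
    (I : Finset ι) (ε : ℝ) (hV : ∀ i ∈ I, ∀ b ∈ W i, V i b ≠ 0 → ε < |V i b|) (δ : ℝ) (K : ℕ) 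
    (hK : ∀ k ≥ K, (k.choose (k/2) : ℝ) ≤ δ * 2 ^ k) :
    (((Fintype.piFinset W).filter (fun a => |∑ i, V i (a i)| ≤ ε)).card : ℝ) ≤ 
      δ * (Fintype.piFinset W).card + 
      ((Fintype.piFinset W).filter (fun a => (I.filter (fun i => V i (a i) ≠ 0)).card < K)).card := by
  set Ω := Fintype.piFinset W with hΩ
  set kk : (ι → ℕ) → ℕ := fun a => (I.filter (fun i => V i (a i) ≠ 0)).card with hkk
  have hδ : 0 ≤ δ := by
    have := hK K le_rfl
    have h2 : (0:ℝ) ≤ δ * 2 ^ K := le_trans (by positivity) this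
    exact nonneg_of_mul_nonneg_left h2 (by positivity)
  let τ : Finset ι → (ι → ℕ) → (ι → ℕ) := fun J a i => if i ∈ J then σ i (a i) else a i
  have hτΩ : ∀ J, ∀ a ∈ Ω, τ J a ∈ Ω := by
    intro J a ha
    rw [hΩ, Fintype.mem_piFinset] at ha ⊢
    intro i
    by_cases h : i ∈ J
    · simp only [τ, h, if_true]; exact (hσ i _ (ha i)).1
    · simp only [τ, h, if_false]; exact ha i
  have hττ : ∀ J, ∀ a ∈ Ω, τ J (τ J a) = a := by
    intro J a ha
    rw [hΩ, Fintype.mem_piFinset] at ha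
    funext i
    by_cases h : i ∈ J
    · simp only [τ, h, if_true]; exact (hσ i _ (ha i)).2.1
    · simp only [τ, h, if_false]
  have hτS : ∀ J, ∀ a ∈ Ω, ∑ i, V i (τ J a i) = ∑ i, V i (a i) - 2 * ∑ i ∈ J, V i (a i) := by
    intro J a ha
    rw [hΩ, Fintype.mem_piFinset] at ha
    have e : ∑ i ∈ J, V i (a i) = ∑ i, if i ∈ J then V i (a i) else 0 := by
      rw [Finset.sum_ite_mem, univ_inter]
    rw [e, mul_sum, ← sum_sub_distrib]
    refine sum_congr rfl fun i _ => ?_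
    by_cases h : i ∈ J
    · simp only [τ, h, if_true]; rw [(hσ i _ (ha i)).2.2]; ring
    · simp only [τ, h, if_false]; ring
  have hcard : ∀ J, (Ω.filter (fun a => |∑ i, V i (a i)| ≤ ε)).card = 
      (Ω.filter (fun a => |∑ i, V i (a i) - 2 * ∑ i ∈ J, V i (a i)| ≤ ε)).card := by
    intro J
    refine Finset.card_nbij' (τ J) (τ J) ?_ ?_ ?_ ?_
    · intro a ha
      simp only [coe_filter, Set.mem_ofPred_eq] at ha ⊢
      refine ⟨hτΩ J a ha.1, ?_⟩
      rw [← hτS J _ (hτΩ J a ha.1), hττ J a ha.1]; exact ha.2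
    · intro a ha
      simp only [coe_filter, Set.mem_ofPred_eq] at ha ⊢
      refine ⟨hτΩ J a ha.1, ?_⟩
      rw [hτS J _ ha.1]; exact ha.2
    · intro a ha
      exact hττ J a (mem_filter.1 ha).1
    · intro a ha
      exact hττ J a (mem_filter.1 ha).1
  have hsw : 2 ^ I.card * (Ω.filter (fun a => |∑ i, V i (a i)| ≤ ε)).card = 
      ∑ a ∈ Ω, (I.powerset.filter (fun J => |∑ i, V i (a i) - 2 * ∑ i ∈ J, V i (a i)| ≤ ε)).card := by
    rw [← card_powerset, ← smul_eq_mul, ← sum_const]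
    rw [sum_congr rfl (fun J _ => hcard J)]
    simp only [card_filter]
    exact sum_comm
  have hpt : ∀ a ∈ Ω, ((I.powerset.filter (fun J => |∑ i, V i (a i) - 2 * ∑ i ∈ J, V i (a i)| ≤ ε)).card : ℝ) ≤ 
      2 ^ I.card * (δ + if kk a < K then 1 else 0) := by
    intro a ha
    have ha' := ha
    rw [hΩ, Fintype.mem_piFinset] at ha'
    by_cases hk : kk a < K
    · rw [if_pos hk]
      have : (I.powerset.filter (fun J => |∑ i, V i (a i) - 2 * ∑ i ∈ J, V i (a i)| ≤ ε)).card ≤ 2 ^ I.card := by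
        rw [← card_powerset]; exact card_filter_le _ _
      have h' : ((I.powerset.filter (fun J => |∑ i, V i (a i) - 2 * ∑ i ∈ J, V i (a i)| ≤ ε)).card : ℝ) ≤ 2 ^ I.card := by
        exact_mod_cast this
      refine h'.trans (le_mul_of_one_le_right (by positivity) (by linarith))
    · rw [if_neg hk, add_zero]
      have h := LO_gen I (fun i => V i (a i)) (∑ i, V i (a i)) ε (fun i hi => hV i hi _ (ha' i))
      have h' := hK (kk a) (not_lt.1 hk)
      have hc : kk a + (I.filter (fun i => ¬ V i (a i) ≠ 0)).card = I.card :=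
        Finset.card_filter_add_card_filter_not _
      refine (Nat.cast_le.2 h).trans ?_
      push_cast
      rw [← hc, pow_add]
      calc _ ≤ (δ * 2 ^ kk a) * 2 ^ (I.filter (fun i => ¬ V i (a i) ≠ 0)).card := by gcongr
        _ = _ := by ring
  have hfin : (2:ℝ) ^ I.card * ((Ω.filter (fun a => |∑ i, V i (a i)| ≤ ε)).card : ℝ) ≤ 
     2 ^ I.card * (δ * Ω.card + (Ω.filter (fun a => kk a < K)).card) := by
    calc _ = ((∑ a ∈ Ω, (I.powerset.filter (fun J => |∑ i, V i (a i) - 2 * ∑ i ∈ J, V i (a i)| ≤ ε)).card : ℕ) : ℝ) := by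
          rw [← hsw]; push_cast; ring
      _ ≤ ∑ a ∈ Ω, 2 ^ I.card * (δ + if kk a < K then 1 else 0) := by
          push_cast; exact sum_le_sum hpt
      _ = _ := by
          rw [← mul_sum, sum_add_distrib, sum_const, nsmul_eq_mul, card_filter]
          push_cast; ring
  exact le_of_mul_le_mul_left hfin (by positivity)

lemma few_nonzero {ι : Type*} [Fintype ι] [DecidableEq ι] (W : ι → Finset ℕ) (V : ι → ℕ → ℝ)
    (I : Finset ι) (t : ι → ℝ) 
    (hI : ∀ i ∈ I, ∃ b ∈ W i, V i b ≠ 0) (ht : ∀ i ∈ I, t i * (W i).card ≤ 1 / 2) (K : ℕ) :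
    (((Fintype.piFinset W).filter (fun a => (I.filter (fun i => V i (a i) ≠ 0)).card < K)).card : ℝ) ≤ 
      2 ^ K * (Real.exp (- ∑ i ∈ I, t i) * (Fintype.piFinset W).card) := by
  set Ω := Fintype.piFinset W with hΩ
  let h : ι → ℕ → ℝ := fun i b => if i ∈ I ∧ V i b ≠ 0 then 1 / 2 else 1
  have h0 : ∀ i b, 0 ≤ h i b := by
    intro i b; simp only [h]; split_ifs <;> norm_num
  have e1 : ∀ a : ι → ℕ, ∏ i, h i (a i) = (1/2) ^ (I.filter (fun i => V i (a i) ≠ 0)).card := by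
    intro a
    simp only [h]
    rw [← prod_filter, prod_const]
    congr 2
    ext i; simp
  have e2 : ∑ a ∈ Ω, ∏ i, h i (a i) = ∏ i, ∑ b ∈ W i, h i b := (Finset.prod_univ_sum W h).symm
  have e3 : ∏ i, ∑ b ∈ W i, h i b ≤ ∏ i, (((W i).card : ℝ) * (if i ∈ I then Real.exp (- t i) else 1)) := by
    refine prod_le_prod (fun i _ => sum_nonneg fun b _ => h0 i b) fun i _ => ?_
    by_cases hi : i ∈ I
    · rw [if_pos hi]
      obtain ⟨b0, hb0, hb1⟩ := hI i hi
      have hh : ∀ b, h i b ≤ 1 := by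
        intro b; simp only [h]; split_ifs <;> norm_num
      rw [← Finset.add_sum_erase _ _ hb0]
      have hb : h i b0 = 1 / 2 := by simp only [h]; rw [if_pos ⟨hi, hb1⟩]
      have hs : ∑ b ∈ (W i).erase b0, h i b ≤ ((W i).card : ℝ) - 1 := by
        refine (sum_le_card_nsmul _ _ 1 (fun b _ => hh b)).trans ?_
        rw [card_erase_of_mem hb0, nsmul_eq_mul, mul_one]
        have : 1 ≤ (W i).card := card_pos.2 ⟨b0, hb0⟩
        rw [Nat.cast_sub this, Nat.cast_one]
      have he := Real.add_one_le_exp (- t i)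
      have hc : (0:ℝ) ≤ (W i).card := Nat.cast_nonneg _
      have := ht i hi
      nlinarith
    · rw [if_neg hi, mul_one]
      simp [h, hi]
  have e4 : ∏ i, (((W i).card : ℝ) * (if i ∈ I then Real.exp (- t i) else 1)) = Real.exp (- ∑ i ∈ I, t i) * Ω.card := by
    rw [prod_mul_distrib, hΩ, Fintype.card_piFinset, prod_ite_mem, univ_inter, ← Real.exp_sum, sum_neg_distrib]
    push_cast; ring
  rw [← e4]
  refine le_trans ?_ (mul_le_mul_of_nonneg_left e3 (by positivity))
  rw [← e2, mul_sum, card_filter]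
  push_cast
  refine sum_le_sum fun a _ => ?_
  rw [e1]
  split_ifs with hk
  · rw [one_div, inv_pow, ← div_eq_mul_inv, one_le_div (by positivity)]
    exact pow_le_pow_right₀ (by norm_num) hk.le
  · positivity
end PartD2


section PartD3
open Finset

noncomputable def VV (ℓ q b : ℕ) : ℝ :=
  ww q * ((if (b : ZMod q) = ℓ then 1 else 0) - (if (b : ZMod q) = -ℓ then 1 else 0))

def WW (y : ℕ) : Finset (↥(Nat.primesLE y) → ℕ) := Fintype.piFinset (fun i => Ico 1 i.1)

lemma VV_neg (ℓ q b : ℕ) (hb : b ≤ q) : VV ℓ q (q - b) = - VV ℓ q b := by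
  unfold VV
  have e : ((q - b : ℕ) : ZMod q) = -b := by
    rw [Nat.cast_sub hb]; simp
  simp only [e, neg_eq_iff_eq_neg, neg_neg]
  ring

lemma VV_abs (ℓ q b : ℕ) (hq : 2 ≤ q) (h : VV ℓ q b ≠ 0) : 1 / (q:ℝ) ≤ |VV ℓ q b| := by
  have h1 := ww_ge q hq
  have h2 : |VV ℓ q b| = ww q := by
    unfold VV at h ⊢
    rw [abs_mul, abs_of_nonneg (ww_nonneg q hq)]
    split_ifs at h ⊢ <;> simp_all
  rw [h2]; exact h1

lemma VV_self (ℓ q : ℕ) (hℓ : 0 < ℓ) (hq : 2 * ℓ < q) : VV ℓ q ℓ ≠ 0 := by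
  unfold VV
  have h1 := ww_ge q (by omega)
  have h3 : (0:ℝ) < q := by exact_mod_cast (by omega : 0 < q)
  have h2 : (0:ℝ) < 1 / q := by positivity
  have h4 : ¬ ((ℓ : ZMod q) = -ℓ) := by
    intro h
    have h5 : ((2 * ℓ : ℕ) : ZMod q) = 0 := by
      push_cast; rw [two_mul]; nth_rewrite 1 [h]; simp
    rw [ZMod.natCast_eq_zero_iff] at h5
    have := Nat.le_of_dvd (by omega) h5
    omega
  rw [if_pos rfl, if_neg h4]
  simp; linarith

lemma exists_primes_sum (ℓ : ℕ) (C : ℝ) : ∃ N : ℕ, 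
    C ≤ ∑ q ∈ (range N).filter (fun q => q.Prime ∧ 2 * ℓ < q), 1 / (q:ℝ) := by
  have h := Nat.Primes.not_summable_one_div
  have h := not_summable_one_div_on_primes
  rw [not_summable_iff_tendsto_nat_atTop_of_nonneg (fun n => Set.indicator_nonneg (fun _ _ => by positivity) n)] at h
  obtain ⟨N, hN⟩ := (h.eventually_ge_atTop (C + ∑ n ∈ range (2 * ℓ + 1), 1 / (n:ℝ))).exists
  refine ⟨N, ?_⟩
  have : ∑ i ∈ range N, Set.indicator {p : ℕ | p.Prime} (fun n : ℕ => 1 / (n:ℝ)) i ≤ 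
    ∑ q ∈ (range N).filter (fun q => q.Prime ∧ 2 * ℓ < q), 1 / (q:ℝ) + ∑ n ∈ range (2 * ℓ + 1), 1 / (n:ℝ) := by
    simp only [Set.indicator_apply, Set.mem_ofPred_eq]
    rw [← sum_filter, ← sum_filter_add_sum_filter_not ((range N).filter _) (fun q => 2 * ℓ < q), filter_filter]
    refine add_le_add le_rfl ?_
    refine sum_le_sum_of_subset_of_nonneg (fun r hr => ?_) (fun r hr _ => by positivity)
    simp only [mem_filter, mem_range] at hr ⊢
    omega
  linarith

lemma anti (ℓ : ℕ) (hℓ : 0 < ℓ) (δ : ℝ) (hδ : 0 < δ) : ∃ ε > (0:ℝ), ∃ Y : ℕ, ∀ y ≥ Y,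
    (((WW y).filter (fun a => |∑ i, VV ℓ i.1 (a i)| ≤ ε)).card : ℝ) ≤ δ * (WW y).card := by
  obtain ⟨K, hK⟩ := choose_half_small (δ / 2) (by positivity)
  obtain ⟨N, hN⟩ := exists_primes_sum ℓ (2 * (- Real.log (δ / 2 / 2 ^ K)))
  refine ⟨1 / (N + 1), by positivity, N, fun y hy => ?_⟩
  set I0 := (range N).filter (fun q => q.Prime ∧ 2 * ℓ < q) with hI0
  set I : Finset ↥(Nat.primesLE y) := I0.subtype (· ∈ Nat.primesLE y) with hI
  have hmI : ∀ i ∈ I, i.1 < N ∧ i.1.Prime ∧ 2 * ℓ < i.1 := by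
    intro i hi
    rw [hI, mem_subtype, hI0, mem_filter, mem_range] at hi
    exact hi
  have h1 := flip_avg (fun i : ↥(Nat.primesLE y) => Ico 1 i.1) (fun i => VV ℓ i.1) (fun i b => i.1 - b)
    (by
      intro i b hb
      rw [mem_Ico] at hb
      have hp := (Nat.mem_primesLE.1 i.2).2.two_le
      refine ⟨mem_Ico.2 ⟨by omega, by omega⟩, by omega, VV_neg ℓ i.1 b (by omega)⟩) I (1 / (N + 1))
    (by
      intro i hi b hb hne
      obtain ⟨a1, a2, a3⟩ := hmI i hi
      refine lt_of_lt_of_le ?_ (VV_abs ℓ i.1 b a2.two_le hne)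
      have : (0:ℝ) < i.1 := by exact_mod_cast a2.pos
      have : (i.1 : ℝ) < N := by exact_mod_cast a1
      gcongr
      linarith) (δ / 2) K hK
  have h2 := few_nonzero (fun i : ↥(Nat.primesLE y) => Ico 1 i.1) (fun i => VV ℓ i.1) I (fun i => (1/2) * (1 / (i.1:ℝ)))
    (by
      intro i hi
      obtain ⟨a1, a2, a3⟩ := hmI i hi
      exact ⟨ℓ, mem_Ico.2 ⟨hℓ, by omega⟩, VV_self ℓ i.1 hℓ a3⟩)
    (by
      intro i hi
      obtain ⟨a1, a2, a3⟩ := hmI i hi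
      have : (0:ℝ) < i.1 := by exact_mod_cast a2.pos
      have h' : ((i.1 - 1 : ℕ) : ℝ) ≤ i.1 := by exact_mod_cast Nat.sub_le _ _
      rw [Nat.card_Ico]
      calc (1/2) * (1 / (i.1:ℝ)) * ((i.1 - 1 : ℕ) : ℝ) ≤ (1/2) * (1 / (i.1:ℝ)) * i.1 := by gcongr
        _ = 1 / 2 := by field_simp) K
  have h3 : ∑ i ∈ I, (1/2) * (1 / (i.1:ℝ)) = (1/2) * ∑ q ∈ I0, 1 / (q:ℝ) := by
    rw [← mul_sum, hI, sum_subtype_eq_sum_filter (f := fun q : ℕ => 1 / (q:ℝ)), filter_true_of_mem]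
    intro q hq
    rw [hI0, mem_filter, mem_range] at hq
    exact Nat.mem_primesLE.2 ⟨by omega, hq.2.1⟩
  have h4 : Real.exp (- ∑ i ∈ I, (1/2) * (1 / (i.1:ℝ))) ≤ δ / 2 / 2 ^ K := by
    rw [← Real.le_log_iff_exp_le (by positivity), h3]; linarith
  have h5 : (2:ℝ) ^ K * (Real.exp (- ∑ i ∈ I, (1/2) * (1 / (i.1:ℝ))) * (WW y).card) ≤ δ / 2 * (WW y).card := by
    calc _ ≤ (2:ℝ) ^ K * (δ / 2 / 2 ^ K * (WW y).card) := by gcongr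
      _ = _ := by field_simp
  have h6 := h1.trans (add_le_add le_rfl h2)
  change _ ≤ δ / 2 * ((WW y).card : ℝ) + _ at h6
  refine le_trans h6 (le_trans (add_le_add le_rfl h5) (by linarith))
end PartD3


section PartE
open Finset

lemma totient_prod_primes {ι : Type*} [DecidableEq ι] (s : Finset ι) (f : ι → ℕ) (hf : ∀ i ∈ s, (f i).Prime)
    (hinj : Set.InjOn f s) : (∏ i ∈ s, f i).totient = ∏ i ∈ s, (f i - 1) := by
  induction s using Finset.induction_on with
  | empty => simp
  | insert a s ha ih =>
    rw [prod_insert ha, prod_insert ha, Nat.totient_mul, Nat.totient_prime (hf a (mem_insert_self _ _)),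
      ih (fun i hi => hf i (mem_insert_of_mem hi)) (hinj.mono (by simp))]
    refine Nat.Coprime.prod_right fun i hi => ?_
    refine (Nat.coprime_primes (hf a (mem_insert_self _ _)) (hf i (mem_insert_of_mem hi))).2 fun h => ha ?_
    rwa [hinj (mem_insert_self _ _) (mem_insert_of_mem hi) h]

def rr (y p : ℕ) : ↥(Nat.primesLE y) → ℕ := fun i => p % i.1

lemma card_WW (y : ℕ) : (WW y).card = (∏ i : ↥(Nat.primesLE y), i.1).totient := by
  rw [totient_prod_primes _ _ (fun i _ => (Nat.mem_primesLE.1 i.2).2) (fun i _ j _ h => Subtype.ext h), WW,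
    Fintype.card_piFinset]
  simp

lemma fiber_density (y : ℕ) (a : ↥(Nat.primesLE y) → ℕ) (ha : a ∈ WW y) :
    Tendsto (fun x : ℕ => (((Nat.primesLE x).filter (fun p => rr y p = a)).card : ℝ) / Nat.primeCounting x) 
      atTop (𝓝 (((WW y).card : ℝ)⁻¹)) := by
  have hpr : ∀ i : ↥(Nat.primesLE y), i.1.Prime := fun i => (Nat.mem_primesLE.1 i.2).2
  have hco : Pairwise (Function.onFun Nat.Coprime (fun i : ↥(Nat.primesLE y) => i.1)) := fun i j hij =>
    (Nat.coprime_primes (hpr i) (hpr j)).2 (fun h => hij (Subtype.ext h))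
  rw [WW, Fintype.mem_piFinset] at ha
  obtain ⟨b, hb⟩ := Nat.chineseRemainderOfFinset a (fun i : ↥(Nat.primesLE y) => i.1) univ 
    (fun i _ => (hpr i).ne_zero) (fun i _ j _ hij => hco hij)
  set M := ∏ i : ↥(Nat.primesLE y), i.1 with hM
  have hM0 : NeZero M := ⟨prod_ne_zero_iff.2 fun i _ => (hpr i).ne_zero⟩
  have hbu : IsUnit (b : ZMod M) := by
    rw [ZMod.isUnit_iff_coprime]
    refine Nat.Coprime.prod_right fun i _ => ?_
    rw [Nat.coprime_comm, (hpr i).coprime_iff_not_dvd]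
    intro hd
    have h1 := hb i (mem_univ _)
    have h2 := mem_Ico.1 (ha i)
    have h3 : a i % i.1 = 0 := by rw [← h1]; exact Nat.mod_eq_zero_of_dvd hd
    rw [Nat.mod_eq_of_lt h2.2] at h3
    omega
  have h := piRes_density (b : ZMod M) hbu
  rw [card_WW]
  refine h.congr fun x => ?_
  unfold piRes
  congr 3
  refine filter_congr fun p _ => ?_
  rw [ZMod.natCast_eq_natCast_iff]
  constructor
  · intro hp
    funext i
    have h1 : p ≡ a i [MOD i.1] := (hp.of_dvd (dvd_prod_of_mem _ (mem_univ i))).trans (hb i (mem_univ _))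
    have h2 := mem_Ico.1 (ha i)
    unfold rr
    rw [h1, Nat.mod_eq_of_lt h2.2]
  · intro hp
    have h1 : ∀ i : ↥(Nat.primesLE y), p ≡ b [MOD i.1] := fun i => by
      refine Nat.ModEq.trans ?_ (hb i (mem_univ _)).symm
      have := congrFun hp i
      unfold rr at this
      rw [← this]
      exact (Nat.mod_modEq _ _).symm
    rw [Nat.modEq_iff_dvd, hM, Nat.cast_prod]
    refine Finset.prod_dvd_of_coprime (fun i _ j _ hij => ?_) (fun i _ => (Nat.modEq_iff_dvd.1 (h1 i)))
    exact Nat.isCoprime_iff_coprime.2 (hco hij)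

lemma rr_mem (y p : ℕ) (hp : p.Prime) (hy : y < p) : rr y p ∈ WW y := by
  rw [WW, Fintype.mem_piFinset]
  intro i
  have hi := Nat.mem_primesLE.1 i.2
  refine mem_Ico.2 ⟨Nat.one_le_iff_ne_zero.2 fun h => ?_, Nat.mod_lt _ hi.2.pos⟩
  have := (Nat.prime_dvd_prime_iff_eq hi.2 hp).1 (Nat.dvd_of_mod_eq_zero h)
  omega

lemma pred_density (y : ℕ) (Q : (↥(Nat.primesLE y) → ℕ) → Prop) [DecidablePred Q] :
    Tendsto (fun x : ℕ => (((Nat.primesLE x).filter (fun p => y < p ∧ Q (rr y p))).card : ℝ) / Nat.primeCounting x) 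
      atTop (𝓝 (((WW y).filter Q).card / ((WW y).card : ℝ))) := by
  have h : Tendsto (fun x : ℕ => ∑ a ∈ (WW y).filter Q, 
      (((Nat.primesLE x).filter (fun p => rr y p = a)).card : ℝ) / Nat.primeCounting x) atTop 
      (𝓝 (∑ a ∈ (WW y).filter Q, ((WW y).card : ℝ)⁻¹)) :=
    tendsto_finsetSum _ fun a ha => fiber_density y a (mem_filter.1 ha).1
  rw [sum_const, nsmul_eq_mul, ← div_eq_mul_inv] at h
  refine h.congr fun x => ?_
  rw [← sum_div]
  congr 1
  rw [card_eq_sum_card_fiberwise (f := rr y) (t := (WW y).filter Q)]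
  · push_cast
    refine sum_congr rfl fun a ha => ?_
    obtain ⟨ha1, ha2⟩ := mem_filter.1 ha
    rw [filter_filter]
    congr 2
    refine filter_congr fun p hp => ⟨fun h => ⟨⟨?_, h ▸ ha2⟩, h⟩, fun h => h.2⟩
    by_contra hy
    have hp' := Nat.mem_primesLE.1 hp
    rw [WW, Fintype.mem_piFinset] at ha1
    have := mem_Ico.1 (ha1 ⟨p, Nat.mem_primesLE.2 ⟨not_lt.1 hy, hp'.2⟩⟩)
    rw [← h] at this
    unfold rr at this
    simp at this
  · intro p hp
    obtain ⟨h1, h2, h3⟩ := mem_filter.1 hp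
    exact mem_filter.2 ⟨rr_mem y p (Nat.mem_primesLE.1 h1).2 h2, h3⟩

noncomputable def SS (ℓ y : ℕ) (a : ↥(Nat.primesLE y) → ℕ) : ℝ := ∑ i, VV ℓ i.1 (a i)

lemma SS_symm (ℓ y : ℕ) (ε : ℝ) : ((WW y).filter (fun a => ε < SS ℓ y a)).card = 
    ((WW y).filter (fun a => SS ℓ y a < -ε)).card := by
  let τ : (↥(Nat.primesLE y) → ℕ) → (↥(Nat.primesLE y) → ℕ) := fun a i => i.1 - a i
  have h1 : ∀ a ∈ WW y, τ a ∈ WW y := by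
    intro a ha
    rw [WW, Fintype.mem_piFinset] at ha ⊢
    intro i
    have := mem_Ico.1 (ha i)
    exact mem_Ico.2 ⟨by simp only [τ]; omega, by simp only [τ]; omega⟩
  have h2 : ∀ a ∈ WW y, τ (τ a) = a := by
    intro a ha
    rw [WW, Fintype.mem_piFinset] at ha
    funext i
    have := mem_Ico.1 (ha i)
    simp only [τ]; omega
  have h3 : ∀ a ∈ WW y, SS ℓ y (τ a) = - SS ℓ y a := by
    intro a ha
    rw [WW, Fintype.mem_piFinset] at ha
    unfold SS
    rw [← sum_neg_distrib]
    exact sum_congr rfl fun i _ => VV_neg _ _ _ (mem_Ico.1 (ha i)).2.le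
  refine card_nbij' τ τ ?_ ?_ ?_ ?_
  · intro a ha
    simp only [coe_filter, Set.mem_ofPred_eq] at ha ⊢
    exact ⟨h1 a ha.1, by rw [h3 a ha.1]; linarith⟩
  · intro a ha
    simp only [coe_filter, Set.mem_ofPred_eq] at ha ⊢
    exact ⟨h1 a ha.1, by rw [h3 a ha.1]; linarith⟩
  · intro a ha
    exact h2 a (mem_filter.1 ha).1
  · intro a ha
    exact h2 a (mem_filter.1 ha).1

lemma SS_half (ℓ y : ℕ) (ε : ℝ) : 
    (WW y).card ≤ 2 * ((WW y).filter (fun a => ε < SS ℓ y a)).card + ((WW y).filter (fun a => |SS ℓ y a| ≤ ε)).card := by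
  have h := SS_symm ℓ y ε
  rw [two_mul]; nth_rewrite 2 [h]
  refine le_trans (card_le_card (t := ((WW y).filter (fun a => ε < SS ℓ y a) ∪ (WW y).filter (fun a => SS ℓ y a < -ε)) ∪ 
    (WW y).filter (fun a => |SS ℓ y a| ≤ ε)) ?_) ((card_union_le _ _).trans (Nat.add_le_add_right (card_union_le _ _) _))
  intro a ha
  simp only [mem_union, mem_filter, ha, true_and, abs_le]
  by_contra hc
  push Not at hc
  linarith [hc.2 hc.1.2]

lemma log_totient (n : ℕ) (hn : n ≠ 0) : Real.log n.totient = Real.log n - ∑ q ∈ n.primeFactors, ww q := by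
  have h : (n.totient : ℝ) = n * ∏ p ∈ n.primeFactors, (1 - 1 / (p:ℝ)) := by
    have := Nat.totient_eq_mul_prod_factors n
    have h2 : ((n.totient : ℚ) : ℝ) = ((n * ∏ p ∈ n.primeFactors, (1 - (p : ℚ)⁻¹) : ℚ) : ℝ) := by rw [this]
    push_cast at h2
    simpa using h2
  have hpos : ∀ p ∈ n.primeFactors, (1 - 1 / (p:ℝ)) ≠ 0 := fun p hp => by
    have := (Nat.prime_of_mem_primeFactors hp).two_le
    have h2 : (2:ℝ) ≤ p := by exact_mod_cast this
    have : 1 / (p:ℝ) < 1 := by rw [div_lt_one (by linarith)]; linarith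
    linarith
  rw [h, Real.log_mul (by exact_mod_cast hn) (prod_ne_zero_iff.2 hpos), Real.log_prod hpos]
  unfold ww
  rw [sum_neg_distrib]; ring

lemma small_part (n y : ℕ) (hn : n ≠ 0) : ∑ q ∈ n.primeFactors, ww q = 
    ∑ q ∈ Nat.primesLE y, (ww q * if q ∣ n then 1 else 0) + ∑ r ∈ n.primeFactors.filter (fun r => y < r), ww r := by
  rw [← sum_filter_add_sum_filter_not n.primeFactors (fun r => y < r), add_comm]
  congr 1
  simp only [mul_ite, mul_one, mul_zero]
  rw [← sum_filter]
  refine sum_congr ?_ fun _ _ => rfl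
  ext q
  simp only [mem_filter, Nat.mem_primesLE, Nat.mem_primeFactors, not_lt]
  tauto

lemma SS_rr (ℓ y p : ℕ) (hp : ℓ < p) : SS ℓ y (rr y p) = 
    ∑ q ∈ Nat.primesLE y, (ww q * if q ∣ p - ℓ then 1 else 0) - ∑ q ∈ Nat.primesLE y, (ww q * if q ∣ p + ℓ then 1 else 0) := by
  unfold SS rr
  rw [Finset.sum_coe_sort (Nat.primesLE y) (fun q => VV ℓ q (p % q)), ← sum_sub_distrib]
  refine sum_congr rfl fun q _ => ?_
  unfold VV
  have e1 : (((p % q : ℕ) : ZMod q) = ℓ) ↔ q ∣ p - ℓ := by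
    rw [ZMod.natCast_mod, ← ZMod.natCast_eq_zero_iff, Nat.cast_sub hp.le, sub_eq_zero]
  have e2 : (((p % q : ℕ) : ZMod q) = -ℓ) ↔ q ∣ p + ℓ := by
    rw [ZMod.natCast_mod, ← ZMod.natCast_eq_zero_iff, Nat.cast_add, eq_neg_iff_add_eq_zero]
  simp only [e1, e2]; ring

lemma totient_lt_iff (ℓ p : ℕ) (hp : ℓ < p) : Nat.totient (p - ℓ) < Nat.totient (p + ℓ) ↔ 
    0 < Real.log (p + ℓ : ℕ) - Real.log (p - ℓ : ℕ) + 
      (∑ q ∈ (p - ℓ).primeFactors, ww q - ∑ q ∈ (p + ℓ).primeFactors, ww q) := by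
  have h1 : 0 < (p - ℓ).totient := Nat.totient_pos.2 (by omega)
  have h2 : 0 < (p + ℓ).totient := Nat.totient_pos.2 (by omega)
  rw [← Nat.cast_lt (α := ℝ), ← Real.log_lt_log_iff (by exact_mod_cast h1) (by exact_mod_cast h2),
    log_totient _ (by omega), log_totient _ (by omega), ← sub_pos]
  constructor <;> intro h <;> linarith

lemma diff_bound (ℓ y p : ℕ) (hp : ℓ < p) : 
    |(∑ q ∈ (p - ℓ).primeFactors, ww q - ∑ q ∈ (p + ℓ).primeFactors, ww q) - SS ℓ y (rr y p)| ≤ TT ℓ y p := by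
  rw [SS_rr ℓ y p hp, small_part (p - ℓ) y (by omega), small_part (p + ℓ) y (by omega)]
  have hn : ∀ n : ℕ, 0 ≤ ∑ r ∈ n.primeFactors.filter (fun r => y < r), ww r := fun n =>
    sum_nonneg fun r hr => ww_nonneg r (Nat.prime_of_mem_primeFactors (mem_filter.1 hr).1).two_le
  have h1 := hn (p - ℓ)
  have h2 := hn (p + ℓ)
  unfold TT
  rw [abs_le]
  constructor <;> linarith

lemma log_diff (ℓ : ℕ) (ε : ℝ) (hε : 0 < ε) : ∃ P0 : ℕ, ∀ p > P0, Real.log (p + ℓ : ℕ) - Real.log (p - ℓ : ℕ) ≤ ε := by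
  obtain ⟨N, hN⟩ := exists_nat_gt (2 * ℓ / ε)
  refine ⟨N + ℓ, fun p hp => ?_⟩
  have h1 : (0:ℝ) < (p - ℓ : ℕ) := by exact_mod_cast (by omega : 0 < p - ℓ)
  have h2 : (0:ℝ) < (p + ℓ : ℕ) := by exact_mod_cast (by omega : 0 < p + ℓ)
  rw [← Real.log_div h2.ne' h1.ne']
  have h3 := Real.log_le_sub_one_of_pos (div_pos h2 h1)
  refine h3.trans ?_
  have e : ((p + ℓ : ℕ) : ℝ) = (p - ℓ : ℕ) + 2 * ℓ := by
    rw [Nat.cast_sub (by omega)]; push_cast; ring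
  rw [e, add_div, div_self h1.ne', add_sub_cancel_left, div_le_iff₀ h1]
  rw [div_lt_iff₀ hε] at hN
  have : (N:ℝ) ≤ (p - ℓ : ℕ) := by exact_mod_cast (by omega : N ≤ p - ℓ)
  nlinarith
end PartE


section PartF
open Finset

lemma primeCounting_real_atTop : Tendsto (fun x : ℕ => (Nat.primeCounting x : ℝ)) atTop atTop :=
  tendsto_natCast_atTop_atTop.comp Nat.tendsto_primeCounting

noncomputable def GG (ℓ x : ℕ) : Finset ℕ :=
  (Nat.primesLE x).filter (fun p => ℓ < p ∧ Nat.totient (p - ℓ) < Nat.totient (p + ℓ))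

lemma main_bound (ℓ : ℕ) (hℓ : 0 < ℓ) (δ : ℝ) (hδ : 0 < δ) : ∀ᶠ x : ℕ in atTop,
    |((GG ℓ x).card : ℝ) / Nat.primeCounting x - 1 / 2| ≤ 4 * δ := by
  obtain ⟨ε, hε, Y1, hY1⟩ := anti ℓ hℓ δ hδ
  obtain ⟨Y2, hY2⟩ := tail_bound ℓ hℓ (ε / 2) δ (by positivity) hδ
  set y := max Y1 Y2 with hy
  have h1 := hY1 y (le_max_left _ _)
  have h2 := hY2 y (le_max_right _ _)
  obtain ⟨P0, hP0⟩ := log_diff ℓ (ε / 2) (by positivity)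
  have hA := pred_density y (fun a => ε < SS ℓ y a)
  have hB := pred_density y (fun a => SS ℓ y a < -ε)
  rw [← SS_symm] at hB
  set s : ℝ := ((WW y).filter (fun a => ε < SS ℓ y a)).card / ((WW y).card : ℝ) with hs
  have hWpos : (0:ℝ) < (WW y).card := by
    rw [card_WW]
    have hM : 0 < ∏ i : ↥(Nat.primesLE y), i.1 := prod_pos fun i _ => (Nat.mem_primesLE.1 i.2).2.pos
    exact Nat.cast_pos.2 (Nat.totient_pos.2 hM)
  have hs1 : (1 - δ) / 2 ≤ s := by
    have h := SS_half ℓ y ε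
    have h' : ((WW y).card : ℝ) ≤ 2 * ((WW y).filter (fun a => ε < SS ℓ y a)).card + 
      ((WW y).filter (fun a => |SS ℓ y a| ≤ ε)).card := by exact_mod_cast h
    have h1' : (((WW y).filter (fun a => |SS ℓ y a| ≤ ε)).card : ℝ) ≤ δ * (WW y).card := h1
    rw [hs, le_div_iff₀ hWpos]
    linarith
  have eA := hA.eventually (lt_mem_nhds (show s - δ < s by linarith))
  have eB := hB.eventually (lt_mem_nhds (show s - δ < s by linarith))
  filter_upwards [h2, eA, eB, primeCounting_real_atTop.eventually_ge_atTop ((P0 + ℓ + 1) / δ), 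
    primeCounting_real_atTop.eventually_gt_atTop 0] with x g1 g2 g3 g4 g5
  rw [div_le_iff₀ hδ] at g4
  rw [lt_div_iff₀ g5] at g2 g3
  set A := (Nat.primesLE x).filter (fun p => y < p ∧ ε < SS ℓ y (rr y p)) with hAd
  set B := (Nat.primesLE x).filter (fun p => y < p ∧ SS ℓ y (rr y p) < -ε) with hBd
  set T := (Nat.primesLE x).filter (fun p => ℓ < p ∧ ε / 2 < TT ℓ y p) with hT
  have hr : ((range (P0 + ℓ + 1)).card : ℝ) ≤ δ * Nat.primeCounting x := by
    rw [card_range]; push_cast; linarith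
  have k1 : A ⊆ GG ℓ x ∪ (T ∪ range (P0 + ℓ + 1)) := by
    intro p hp
    obtain ⟨p1, p2, p3⟩ := mem_filter.1 hp
    by_contra hc
    simp only [mem_union, not_or, GG, hT, mem_filter, mem_range, p1, true_and, not_and, not_lt] at hc
    obtain ⟨c1, c2, c3⟩ := hc
    have hlp : ℓ < p := by omega
    refine absurd ((totient_lt_iff ℓ p hlp).2 ?_) (not_lt.2 (c1 hlp))
    have d := abs_le.1 (diff_bound ℓ y p hlp)
    have t := c2 hlp
    have l : Real.log (p - ℓ : ℕ) ≤ Real.log (p + ℓ : ℕ) := 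
      Real.log_le_log (by exact_mod_cast (by omega : 0 < p - ℓ)) (by exact_mod_cast (by omega : p - ℓ ≤ p + ℓ))
    linarith [d.1, d.2]
  have k2 : GG ℓ x ∩ B ⊆ T ∪ range (P0 + ℓ + 1) := by
    intro p hp
    obtain ⟨hpG, hpB⟩ := mem_inter.1 hp
    obtain ⟨p1, p2, p3⟩ := mem_filter.1 hpB
    obtain ⟨_, hlp, q3⟩ := mem_filter.1 hpG
    by_contra hc
    simp only [mem_union, not_or, hT, mem_filter, mem_range, p1, true_and, not_and, not_lt] at hc
    obtain ⟨c2, c3⟩ := hc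
    have h0 := (totient_lt_iff ℓ p hlp).1 q3
    have d := abs_le.1 (diff_bound ℓ y p hlp)
    have t := c2 hlp
    have l := hP0 p (by omega)
    linarith [d.1, d.2]
  have k3 : ((T ∪ range (P0 + ℓ + 1)).card : ℝ) ≤ 2 * δ * Nat.primeCounting x := by
    have : ((T ∪ range (P0 + ℓ + 1)).card : ℝ) ≤ T.card + (range (P0 + ℓ + 1)).card := by
      exact_mod_cast card_union_le _ _
    linarith
  have k4 : (A.card : ℝ) ≤ (GG ℓ x).card + (T ∪ range (P0 + ℓ + 1)).card := by
    exact_mod_cast (card_le_card k1).trans (card_union_le _ _)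
  have k5 : ((GG ℓ x).card : ℝ) + B.card ≤ Nat.primeCounting x + (T ∪ range (P0 + ℓ + 1)).card := by
    have e := card_union_add_card_inter (GG ℓ x) B
    have u : (GG ℓ x ∪ B).card ≤ Nat.primeCounting x := by
      rw [← Nat.primesLE_card_eq_primeCounting]
      exact card_le_card (union_subset (filter_subset _ _) (filter_subset _ _))
    have v := card_le_card k2
    have : (GG ℓ x).card + B.card ≤ Nat.primeCounting x + (T ∪ range (P0 + ℓ + 1)).card := by omega
    exact_mod_cast this
  rw [abs_le]
  constructor
  · rw [le_sub_iff_add_le, le_div_iff₀ g5]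
    nlinarith
  · rw [sub_le_iff_le_add, div_le_iff₀ g5]
    nlinarith
end PartF

theorem phi_diff_negative_density (ℓ : ℕ) (hℓ : 0 < ℓ) :
    Tendsto (fun x : ℕ =>
      ({p : ℕ | p.Prime ∧ p ≤ x ∧ ℓ < p ∧
          Nat.totient (p - ℓ) < Nat.totient (p + ℓ)}.ncard : ℝ) /
        (Nat.primeCounting x : ℝ)) atTop (𝓝 (1 / 2)) := by
  have e : ∀ x : ℕ, {p : ℕ | p.Prime ∧ p ≤ x ∧ ℓ < p ∧
          Nat.totient (p - ℓ) < Nat.totient (p + ℓ)}.ncard = (GG ℓ x).card := by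
    intro x
    rw [← Set.ncard_coe_finset]
    congr 1
    ext p
    simp only [GG, Finset.coe_filter, Set.mem_ofPred_eq, Nat.mem_primesLE]
    tauto
  simp only [e]
  rw [Metric.tendsto_nhds]
  intro δ hδ
  filter_upwards [main_bound ℓ hℓ (δ / 8) (by positivity)] with x hx
  rw [Real.dist_eq]
  linarith
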